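/- Assume f ∈ L^∞(Ω), u ∈ H²(Ω), and let ρ₀ ≥ 1. There exists a constant C > 0 (depending on Ω, a, b, c, u, f and ρ₀) such that for all N and all meshes X, X̃ ∈ S_N with ‖X − X̃‖_∞ < 1/(ρ₀ N), the corresponding finite element solutions u_h and u_{h̃} satisfy: ‖(u_h − u_{h̃})'‖_{L¹(Ω)} ≤ C N ‖X − X̃‖_∞, ‖u_h − u_{h̃}‖_Ω ≤ C N^{−1/2} ‖X − X̃‖_∞^{1/2}, and | ‖u_h‖_E² − ‖u_{h̃}‖_E² | ≤ C N^{−1/2} ‖X − X̃‖_∞^{1/2}, where ‖v‖_E² = ∫₀¹ ( a v'² + (c − b'/2) v² ) dx. -/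

import Mathlib

/-!
Setting of Huang–He, "Error analysis for equidistributing meshes":
the boundary value problem  −(a u')' + b u' + c u = f on Ω = (0,1), u(0)=u(1)=0,
its linear finite element discretization on a mesh 0 = x₀ < ⋯ < x_N = 1,
and the residual-based equidistribution quantities.
-/

noncomputable section
open MeasureTheory Real

namespace EquidMesh

/-- L² norm on (0,1). -/
def L2 (g : ℝ → ℝ) : ℝ := Real.sqrt (∫ t in (0:ℝ)..1, (g t)^2)

/-- L¹ norm on (0,1). -/
def L1 (g : ℝ → ℝ) : ℝ := ∫ t in (0:ℝ)..1, |g t|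

/-- The L^{2/3} quasi-norm on (0,1): (∫₀¹ |g|^{2/3})^{3/2}. -/
def Lp23 (g : ℝ → ℝ) : ℝ := (∫ t in (0:ℝ)..1, |g t| ^ ((2:ℝ)/3)) ^ ((3:ℝ)/2)

/-- L^∞ norm (essential supremum of |g|) on (0,1). -/
def Linf (g : ℝ → ℝ) : ℝ := essSup (fun t => |g t|) (volume.restrict (Set.Ioo (0:ℝ) 1))

/-- Membership in L²(0,1). -/
def MemL2 (g : ℝ → ℝ) : Prop :=
  Measurable g ∧ IntervalIntegrable (fun t => (g t)^2) volume 0 1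

/-- Membership in L^∞(0,1). -/
def MemLinf (g : ℝ → ℝ) : Prop :=
  Measurable g ∧ ∃ M : ℝ, ∀ᵐ x ∂(volume.restrict (Set.Ioo (0:ℝ) 1)), |g x| ≤ M

/-- `g` is absolutely continuous on [0,1] with derivative `g' ∈ L¹(0,1)`. -/
def HasL1Deriv (g g' : ℝ → ℝ) : Prop :=
  Measurable g' ∧ IntervalIntegrable g' volume 0 1 ∧
    ∀ x ∈ Set.Icc (0:ℝ) 1, g x = g 0 + ∫ t in (0:ℝ)..x, g' t

/-- A function in H¹(0,1): absolutely continuous on [0,1], carried together with its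
(a.e.) derivative, which lies in L²(0,1). -/
structure H1 where
  val : ℝ → ℝ
  dval : ℝ → ℝ
  dval_meas : Measurable dval
  dval_int : IntervalIntegrable dval volume 0 1
  dval_sq_int : IntervalIntegrable (fun t => (dval t)^2) volume 0 1
  ftc : ∀ x ∈ Set.Icc (0:ℝ) 1, val x = val 0 + ∫ t in (0:ℝ)..x, dval t

/-- `u ∈ H²(0,1)`: the derivative `u'` is absolutely continuous with `u'' ∈ L²(0,1)`. -/
def H1.IsH2 (u : H1) : Prop :=
  ∃ u'' : ℝ → ℝ, Measurable u'' ∧ IntervalIntegrable u'' volume 0 1 ∧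
    IntervalIntegrable (fun t => (u'' t)^2) volume 0 1 ∧
    ∀ x ∈ Set.Icc (0:ℝ) 1, u.dval x = u.dval 0 + ∫ t in (0:ℝ)..x, u'' t

/-- The coefficients of the elliptic problem on Ω = (0,1):
`a, b ∈ W^{1,∞}(Ω)`, `c ∈ L^∞(Ω)`, `a ≥ a₀ > 0`, and `c − b'/2 ≥ 0` a.e. -/
structure Coeffs where
  a : ℝ → ℝ
  b : ℝ → ℝ
  c : ℝ → ℝ
  a' : ℝ → ℝ
  b' : ℝ → ℝ
  a0 : ℝ
  a0_pos : 0 < a0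
  a_lb : ∀ x ∈ Set.Icc (0:ℝ) 1, a0 ≤ a x
  a'_meas : Measurable a'
  b'_meas : Measurable b'
  c_meas : Measurable c
  a'_int : IntervalIntegrable a' volume 0 1
  b'_int : IntervalIntegrable b' volume 0 1
  a'_bdd : ∃ M : ℝ, ∀ᵐ x ∂(volume.restrict (Set.Ioo (0:ℝ) 1)), |a' x| ≤ M
  b'_bdd : ∃ M : ℝ, ∀ᵐ x ∂(volume.restrict (Set.Ioo (0:ℝ) 1)), |b' x| ≤ M
  c_bdd : ∃ M : ℝ, ∀ᵐ x ∂(volume.restrict (Set.Ioo (0:ℝ) 1)), |c x| ≤ M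
  ftc_a : ∀ x ∈ Set.Icc (0:ℝ) 1, a x = a 0 + ∫ t in (0:ℝ)..x, a' t
  ftc_b : ∀ x ∈ Set.Icc (0:ℝ) 1, b x = b 0 + ∫ t in (0:ℝ)..x, b' t
  cb_nonneg : ∀ᵐ x ∂(volume.restrict (Set.Ioo (0:ℝ) 1)), 0 ≤ c x - b' x / 2

/-- The bilinear form B(u,v) = ∫₀¹ (a u' v' + b u' v + c u v) dx. -/
def Coeffs.B (P : Coeffs) (u v : H1) : ℝ :=
  ∫ t in (0:ℝ)..1,
    (P.a t * u.dval t * v.dval t + P.b t * u.dval t * v.val t + P.c t * u.val t * v.val t)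

/-- The right-hand side functional (f, v) = ∫₀¹ f v dx. -/
def ip (f : ℝ → ℝ) (v : H1) : ℝ := ∫ t in (0:ℝ)..1, f t * v.val t

/-- `u ∈ H¹₀(Ω)` is the weak solution: B(u,v) = (f,v) for all v ∈ H¹₀(Ω). -/
def Coeffs.IsWeakSolution (P : Coeffs) (f : ℝ → ℝ) (u : H1) : Prop :=
  u.val 0 = 0 ∧ u.val 1 = 0 ∧
    ∀ v : H1, v.val 0 = 0 → v.val 1 = 0 → P.B u v = ip f v

/-- A mesh of N elements of Ω = (0,1): 0 = x₀ < x₁ < ⋯ < x_N = 1. -/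
structure Mesh (N : ℕ) where
  x : ℕ → ℝ
  x_zero : x 0 = 0
  x_last : x N = 1
  x_mono : ∀ i < N, x i < x (i+1)

/-- Element length (the element of index `i` is `(x i, x (i+1))`, `0 ≤ i < N`). -/
def Mesh.h {N : ℕ} (m : Mesh N) (i : ℕ) : ℝ := m.x (i+1) - m.x i

/-- `v` is piecewise linear with respect to the mesh: its derivative is constant
inside each element. -/
def Mesh.IsPL {N : ℕ} (m : Mesh N) (v : H1) : Prop :=
  ∀ i < N, ∃ s : ℝ, ∀ t ∈ Set.Ioo (m.x i) (m.x (i+1)), v.dval t = s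

/-- `uh` is the linear finite element solution on the mesh `m`:
a continuous piecewise linear function vanishing at 0 and 1 with
B(u_h, v_h) = (f, v_h) for all piecewise linear v_h vanishing at 0 and 1. -/
def Coeffs.IsFESolution (P : Coeffs) (f : ℝ → ℝ) {N : ℕ} (m : Mesh N) (uh : H1) : Prop :=
  uh.val 0 = 0 ∧ uh.val 1 = 0 ∧ m.IsPL uh ∧
    ∀ v : H1, v.val 0 = 0 → v.val 1 = 0 → m.IsPL v → P.B uh v = ip f v

/-- The residual of `w`: r = f + a' w' − b w' − c w. -/
def Coeffs.res (P : Coeffs) (f : ℝ → ℝ) (w : H1) : ℝ → ℝ :=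
  fun t => f t + P.a' t * w.dval t - P.b t * w.dval t - P.c t * w.val t

/-- The element L² average ⟨g⟩_i = (h_i⁻¹ ∫_{K_i} g²)^{1/2}. -/
def Mesh.avg {N : ℕ} (m : Mesh N) (g : ℝ → ℝ) (i : ℕ) : ℝ :=
  Real.sqrt ((1 / m.h i) * ∫ t in (m.x i)..(m.x (i+1)), (g t)^2)

/-- The intensity parameter α_h = (Σ_i h_i ⟨g⟩_i^{2/3})³. -/
def Mesh.alpha {N : ℕ} (m : Mesh N) (g : ℝ → ℝ) : ℝ :=
  (∑ i ∈ Finset.range N, m.h i * (m.avg g i) ^ ((2:ℝ)/3)) ^ 3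

/-- The adaptation function value ρ_i = (1 + α_h⁻¹ ⟨g⟩_i²)^{1/3}. -/
def Mesh.rho {N : ℕ} (m : Mesh N) (g : ℝ → ℝ) (i : ℕ) : ℝ :=
  (1 + (m.alpha g)⁻¹ * (m.avg g i)^2) ^ ((1:ℝ)/3)

/-- σ_h = Σ_i ρ_i h_i. -/
def Mesh.sigma {N : ℕ} (m : Mesh N) (g : ℝ → ℝ) : ℝ :=
  ∑ i ∈ Finset.range N, m.rho g i * m.h i

/-- The mesh equidistributes (the piecewise constant adaptation function built from) `g`:
ρ_i h_i = σ_h / N for all elements. -/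
def Mesh.IsEquidistributing {N : ℕ} (m : Mesh N) (g : ℝ → ℝ) : Prop :=
  ∀ i < N, m.rho g i * m.h i = m.sigma g / (N:ℝ)

/-- Membership in the mesh set S_N: 1/(ρ₀ N) ≤ h_i ≤ 2/N for all i. -/
def Mesh.InS {N : ℕ} (m : Mesh N) (ρ0 : ℝ) : Prop :=
  ∀ i < N, 1 / (ρ0 * (N:ℝ)) ≤ m.h i ∧ m.h i ≤ 2 / (N:ℝ)

/-- The maximum norm distance ‖X − X̃‖_∞ between two meshes with the same N. -/
def meshDist {N : ℕ} (m m' : Mesh N) : ℝ :=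
  (Finset.range (N+1)).sup' (Finset.nonempty_range_iff.mpr (Nat.succ_ne_zero N))
    (fun i => |m.x i - m'.x i|)

/-- The energy norm squared ‖v‖_E² = ∫₀¹ (a v'² + (c − b'/2) v²) dx. -/
def Coeffs.energySq (P : Coeffs) (v : H1) : ℝ :=
  ∫ t in (0:ℝ)..1, (P.a t * (v.dval t)^2 + (P.c t - P.b' t / 2) * (v.val t)^2)

/-!
Write `δ` for the distance of the two meshes. The function `z` on the first mesh with the nodal
values of `uh'` differs from `uh'` by `O(N δ)` in `W^{1,1}`, since only slopes and element
boundaries change. Transporting the test function `uh - z` to the second mesh in the same way, the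
two Galerkin equations and coercivity give `‖(uh - z)'‖ = O(N δ)`, hence the `L¹` estimate.

Independently, `‖uh - u‖ = O(N⁻²)`: the interpolation error `e` vanishes at the nodes and `w'` is
constant on each element for discrete `w`, so integration by parts leaves no derivative on `e` in
`B(e, w)`, and no duality argument is needed. The geometric mean of `‖uh - uh'‖ = O(N⁻²)` and
`‖uh - uh'‖ = O(N δ)` is the `L²` estimate, and the energy estimate follows from
`‖uh‖_E² = (f, uh)`.
-/

section UnitInterval

/-- Lebesgue measure on the unit interval. The half-open interval `(0, 1]` is the one over which
`∫ t in (0 : ℝ)..1` is taken. -/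
abbrev unitMeas : Measure ℝ := volume.restrict (Set.Ioc 0 1)

lemma integral_unit (g : ℝ → ℝ) : ∫ t in (0 : ℝ)..1, g t = ∫ t, g t ∂unitMeas :=
  intervalIntegral.integral_of_le zero_le_one

lemma intervalIntegrable_unit {g : ℝ → ℝ} :
    IntervalIntegrable g volume 0 1 ↔ Integrable g unitMeas :=
  intervalIntegrable_iff_integrableOn_Ioc_of_le zero_le_one

lemma restrict_Ioo_eq_unitMeas : volume.restrict (Set.Ioo (0 : ℝ) 1) = unitMeas :=
  Measure.restrict_congr_set Ioo_ae_eq_Ioc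

lemma ae_unit_of_forall {p : ℝ → Prop} (h : ∀ t ∈ Set.Icc (0 : ℝ) 1, p t) : ∀ᵐ t ∂unitMeas, p t :=
  ae_restrict_of_forall_mem measurableSet_Ioc fun t ht => h t (Set.Ioc_subset_Icc_self ht)

lemma memLp_two_of_sq_intervalIntegrable {g : ℝ → ℝ} (hg : Measurable g)
    (hsq : IntervalIntegrable (fun t => g t ^ 2) volume 0 1) : MemLp g 2 unitMeas :=
  (memLp_two_iff_integrable_sq hg.aestronglyMeasurable).2 (intervalIntegrable_unit.1 hsq)

lemma memLp_top_of_ae_bdd {g : ℝ → ℝ} (hg : Measurable g)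
    (h : ∃ M : ℝ, ∀ᵐ x ∂volume.restrict (Set.Ioo (0 : ℝ) 1), |g x| ≤ M) : MemLp g ⊤ unitMeas := by
  obtain ⟨M, hM⟩ := h
  rw [restrict_Ioo_eq_unitMeas] at hM
  exact memLp_top_of_bound hg.aestronglyMeasurable M hM

lemma L1_eq_integral_unitMeas (g : ℝ → ℝ) : L1 g = ∫ t, |g t| ∂unitMeas := integral_unit _

lemma L1_nonneg (g : ℝ → ℝ) : 0 ≤ L1 g := by
  rw [L1_eq_integral_unitMeas]; exact integral_nonneg fun _ => abs_nonneg _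

lemma L2_nonneg (g : ℝ → ℝ) : 0 ≤ L2 g := Real.sqrt_nonneg _

lemma L2_sq (g : ℝ → ℝ) : L2 g ^ 2 = ∫ t, g t ^ 2 ∂unitMeas := by
  rw [L2, integral_unit, Real.sq_sqrt (integral_nonneg fun _ => sq_nonneg _)]

lemma L1_congr {g k : ℝ → ℝ} (h : g =ᵐ[unitMeas] k) : L1 g = L1 k := by
  rw [L1_eq_integral_unitMeas, L1_eq_integral_unitMeas]
  exact integral_congr_ae (h.fun_comp abs)

lemma L2_congr {g k : ℝ → ℝ} (h : g =ᵐ[unitMeas] k) : L2 g = L2 k := by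
  rw [L2, L2, integral_unit, integral_unit]
  exact congrArg _ (integral_congr_ae (h.fun_comp (· ^ 2)))

lemma L1_eq_lpNorm {g : ℝ → ℝ} (hg : AEStronglyMeasurable g unitMeas) :
    L1 g = lpNorm g 1 unitMeas := by
  rw [lpNorm_one_eq_integral_norm hg, L1_eq_integral_unitMeas]
  rfl

lemma L2_eq_lpNorm {g : ℝ → ℝ} (hg : AEStronglyMeasurable g unitMeas) :
    L2 g = lpNorm g 2 unitMeas := by
  rw [lpNorm_eq_integral_norm_rpow_toReal two_ne_zero ENNReal.ofNat_ne_top hg, L2, integral_unit]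
  simp [Real.sqrt_eq_rpow]

variable {f g k : ℝ → ℝ}

lemma L1_sub_le (hf : Integrable f unitMeas) (hg : Integrable g unitMeas)
    (hk : Integrable k unitMeas) :
    L1 (f - k) ≤ L1 (f - g) + L1 (g - k) := by
  rw [← memLp_one_iff_integrable] at hf hg hk
  rw [L1_eq_lpNorm (hf.1.sub hk.1), L1_eq_lpNorm (hf.1.sub hg.1), L1_eq_lpNorm (hg.1.sub hk.1)]
  exact lpNorm_sub_le_lpNorm_sub_add_lpNorm_sub hf hg le_rfl

lemma L2_sub_le (hf : MemLp f 2 unitMeas) (hg : MemLp g 2 unitMeas) (hk : MemLp k 2 unitMeas) :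
    L2 (f - k) ≤ L2 (f - g) + L2 (g - k) := by
  rw [L2_eq_lpNorm (hf.1.sub hk.1), L2_eq_lpNorm (hf.1.sub hg.1), L2_eq_lpNorm (hg.1.sub hk.1)]
  exact lpNorm_sub_le_lpNorm_sub_add_lpNorm_sub hf hg one_le_two

lemma L2_sub_comm (f g : ℝ → ℝ) : L2 (f - g) = L2 (g - f) := by
  simp only [L2, Pi.sub_apply, sub_sq_comm]

lemma integral_abs_mul_abs_le {ν : Measure ℝ} (hf : MemLp f 2 ν) (hg : MemLp g 2 ν) :
    ∫ t, |f t| * |g t| ∂ν ≤ √(∫ t, f t ^ 2 ∂ν) * √(∫ t, g t ^ 2 ∂ν) := by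
  have := integral_mul_le_Lp_mul_Lq_of_nonneg Real.HolderConjugate.two_two
    (Filter.Eventually.of_forall fun t => abs_nonneg (f t))
    (Filter.Eventually.of_forall fun t => abs_nonneg (g t))
    (by rw [ENNReal.ofReal_ofNat]; exact hf.abs) (by rw [ENNReal.ofReal_ofNat]; exact hg.abs)
  simpa [Real.sqrt_eq_rpow] using this

lemma L1_mul_le_L2_mul_L2 (hf : MemLp f 2 unitMeas) (hg : MemLp g 2 unitMeas) :
    L1 (fun t => f t * g t) ≤ L2 f * L2 g := by
  simp only [L1_eq_integral_unitMeas, L2, integral_unit, abs_mul]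
  exact integral_abs_mul_abs_le hf hg

lemma L1_le_L2 (hg : MemLp g 2 unitMeas) : L1 g ≤ L2 g := by
  simpa [L2] using L1_mul_le_L2_mul_L2 hg (memLp_const (1 : ℝ))

lemma abs_integral_le_L1 (g : ℝ → ℝ) : |∫ t, g t ∂unitMeas| ≤ L1 g := by
  rw [L1_eq_integral_unitMeas]; exact abs_integral_le_integral_abs

lemma L1_mul_le_of_ae_abs_le {M : ℝ} (hf : ∀ᵐ t ∂unitMeas, |f t| ≤ M)
    (hg : Integrable g unitMeas) : L1 (fun t => f t * g t) ≤ M * L1 g := by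
  simp only [L1_eq_integral_unitMeas, abs_mul, ← integral_const_mul]
  refine integral_mono_of_nonneg (Filter.Eventually.of_forall fun _ => by positivity)
    (hg.abs.const_mul M) (hf.mono fun t ht => ?_)
  exact mul_le_mul_of_nonneg_right ht (abs_nonneg _)

lemma abs_integral_mul_le {M : ℝ} (hf : ∀ᵐ t ∂unitMeas, |f t| ≤ M) (hg : Integrable g unitMeas) :
    |∫ t, f t * g t ∂unitMeas| ≤ M * L1 g :=
  (abs_integral_le_L1 _).trans (L1_mul_le_of_ae_abs_le hf hg)

lemma L2_le_of_abs_le {S : ℝ} (h : ∀ t ∈ Set.Icc (0 : ℝ) 1, |g t| ≤ S) : L2 g ≤ S := by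
  have hS : 0 ≤ S := (abs_nonneg _).trans (h 1 (by simp))
  refine le_of_sq_le_sq ?_ hS
  have hsq : ∫ t, g t ^ 2 ∂unitMeas ≤ ∫ _, S ^ 2 ∂unitMeas :=
    integral_mono_of_nonneg (Filter.Eventually.of_forall fun _ => sq_nonneg _)
      (integrable_const _) (ae_unit_of_forall fun t ht =>
        sq_le_sq.2 ((h t ht).trans (le_abs_self S)))
  simpa [L2_sq] using hsq

end UnitInterval

/-- `g` is, on `[a, b]`, a primitive of the integrable function `g'`: equivalently, `g` is
absolutely continuous on `[a, b]` with derivative `g'` almost everywhere. -/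
def IsPrimitiveOn (g g' : ℝ → ℝ) (a b : ℝ) : Prop :=
  IntervalIntegrable g' volume a b ∧ ∀ x ∈ Set.Icc a b, g x = g a + ∫ t in a..x, g' t

namespace IsPrimitiveOn

variable {g g' k k' : ℝ → ℝ} {a b : ℝ}

lemma intervalIntegrable (hg : IsPrimitiveOn g g' a b) {x y : ℝ} (hx : x ∈ Set.Icc a b)
    (hy : y ∈ Set.Icc a b) : IntervalIntegrable g' volume x y :=
  hg.1.mono_set (by
    rw [Set.uIcc_of_le (hx.1.trans hx.2)]; exact Set.uIcc_subset_Icc hx hy)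

lemma integral_eq_sub (hg : IsPrimitiveOn g g' a b) {x y : ℝ} (hx : x ∈ Set.Icc a b)
    (hy : y ∈ Set.Icc a b) : ∫ t in x..y, g' t = g y - g x := by
  have ha : a ∈ Set.Icc a b := Set.left_mem_Icc.2 (hx.1.trans hx.2)
  rw [hg.2 x hx, hg.2 y hy, ← intervalIntegral.integral_interval_sub_left
    (hg.intervalIntegrable ha hy) (hg.intervalIntegrable ha hx)]
  ring

lemma mono (hg : IsPrimitiveOn g g' a b) {x y : ℝ} (hx : x ∈ Set.Icc a b)
    (hy : y ∈ Set.Icc a b) : IsPrimitiveOn g g' x y := by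
  refine ⟨hg.intervalIntegrable hx hy, fun z hz => ?_⟩
  rw [hg.integral_eq_sub hx ⟨hx.1.trans hz.1, hz.2.trans hy.2⟩, add_sub_cancel]

lemma absolutelyContinuousOnInterval (hg : IsPrimitiveOn g g' a b) :
    AbsolutelyContinuousOnInterval (fun x => g a + ∫ t in a..x, g' t) a b :=
  (LipschitzWith.const (g a)).lipschitzOnWith.absolutelyContinuousOnInterval.add
    (hg.1.absolutelyContinuousOnInterval_intervalIntegral Set.left_mem_uIcc)

lemma continuousOn (hg : IsPrimitiveOn g g' a b) : ContinuousOn g (Set.Icc a b) :=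
  (hg.absolutelyContinuousOnInterval.continuousOn.mono Set.Icc_subset_uIcc).congr hg.2

lemma mul (hab : a ≤ b) (hg : IsPrimitiveOn g g' a b) (hk : IsPrimitiveOn k k' a b) :
    IsPrimitiveOn (g * k) (g' * k + g * k') a b := by
  have hu : Set.uIcc a b = Set.Icc a b := Set.uIcc_of_le hab
  refine ⟨(hg.1.mul_continuousOn (hu ▸ hk.continuousOn)).add
    (hk.1.continuousOn_mul (hu ▸ hg.continuousOn)), fun x hx => ?_⟩
  have hsub : Set.uIcc a x ⊆ Set.uIcc a b := by
    rw [hu, Set.uIcc_of_le hx.1]; exact Set.Icc_subset_Icc_right hx.2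
  have hparts := (hg.absolutelyContinuousOnInterval.mono hsub).integral_deriv_mul_eq_sub
    (hk.absolutelyContinuousOnInterval.mono hsub)
  have ha : a ∈ Set.Icc a b := Set.left_mem_Icc.2 hab
  rw [← hg.2 x hx, ← hg.2 a ha, ← hk.2 x hx, ← hk.2 a ha] at hparts
  rw [← sub_eq_iff_eq_add', Pi.mul_apply, Pi.mul_apply, ← hparts]
  refine intervalIntegral.integral_congr_ae ?_
  filter_upwards [hg.1.ae_hasDerivAt_integral, hk.1.ae_hasDerivAt_integral] with t hgt hkt ht
  have htu : t ∈ Set.uIcc a b := hsub (Set.uIoc_subset_uIcc ht)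
  rw [Pi.add_apply, Pi.mul_apply, Pi.mul_apply,
    ((hgt htu a Set.left_mem_uIcc).const_add (g a)).deriv,
    ((hkt htu a Set.left_mem_uIcc).const_add (k a)).deriv, ← hg.2 t (hu ▸ htu),
    ← hk.2 t (hu ▸ htu)]

lemma sub (hg : IsPrimitiveOn g g' a b) (hk : IsPrimitiveOn k k' a b) :
    IsPrimitiveOn (g - k) (g' - k') a b := by
  refine ⟨hg.1.sub hk.1, fun x hx => ?_⟩
  have ha : a ∈ Set.Icc a b := Set.left_mem_Icc.2 (hx.1.trans hx.2)
  simp only [Pi.sub_apply]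
  rw [intervalIntegral.integral_sub (hg.intervalIntegrable ha hx) (hk.intervalIntegrable ha hx),
    hg.integral_eq_sub ha hx, hk.integral_eq_sub ha hx]
  ring

lemma exists_bound (hg : IsPrimitiveOn g g' a b) : ∃ M, ∀ x ∈ Set.Icc a b, |g x| ≤ M :=
  isCompact_Icc.exists_bound_of_continuousOn hg.continuousOn

lemma memLp_top (hg : IsPrimitiveOn g g' 0 1) : MemLp g ⊤ unitMeas := by
  obtain ⟨M, hM⟩ := hg.exists_bound
  exact memLp_top_of_bound ((hg.continuousOn.mono Set.Ioc_subset_Icc_self).aestronglyMeasurable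
    measurableSet_Ioc) M (ae_unit_of_forall hM)

lemma abs_sub_le (hg : IsPrimitiveOn g g' a b) {x y : ℝ} (hx : x ∈ Set.Icc a b)
    (hy : y ∈ Set.Icc a b) : |g x - g y| ≤ ∫ t in a..b, |g' t| := by
  wlog hyx : y ≤ x generalizing x y
  · rw [abs_sub_comm]; exact this hy hx (le_of_not_ge hyx)
  rw [← hg.integral_eq_sub hy hx]
  refine (intervalIntegral.abs_integral_le_integral_abs hyx).trans ?_
  exact intervalIntegral.integral_mono_interval hy.1 hyx hx.2
    (Filter.Eventually.of_forall fun _ => abs_nonneg _) hg.1.abs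

/-! ### Linear interpolation on one interval -/

/-- The chord slope is a mean of `g'`, hence as close to any value of `g'` as the oscillation of
`g'` allows. -/
lemma abs_slope_sub_le (hab : a < b) (hg : IsPrimitiveOn g g' a b) {g'' : ℝ → ℝ}
    (hg' : IsPrimitiveOn g' g'' a b) {t : ℝ} (ht : t ∈ Set.Icc a b) :
    |(g b - g a) / (b - a) - g' t| ≤ ∫ s in a..b, |g'' s| := by
  have hb := sub_pos.2 hab
  have hmean : g b - g a - (b - a) * g' t = ∫ s in a..b, (g' s - g' t) := by
    rw [intervalIntegral.integral_sub hg.1 (by simp), intervalIntegral.integral_const, smul_eq_mul,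
      hg.integral_eq_sub (Set.left_mem_Icc.2 hab.le) (Set.right_mem_Icc.2 hab.le)]
  rw [div_sub' hb.ne', abs_div, abs_of_pos hb, div_le_iff₀ hb, hmean]
  refine (intervalIntegral.norm_integral_le_of_norm_le_const (E := ℝ) fun s hs => ?_).trans_eq
    (by rw [abs_of_pos hb])
  rw [Set.uIoc_of_le hab.le] at hs
  exact hg'.abs_sub_le (Set.Ioc_subset_Icc_self hs) ht

lemma abs_chord_sub_le (hab : a < b) (hg : IsPrimitiveOn g g' a b) {g'' : ℝ → ℝ}
    (hg' : IsPrimitiveOn g' g'' a b) {t : ℝ} (ht : t ∈ Set.Icc a b) :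
    |g a + (g b - g a) / (b - a) * (t - a) - g t| ≤ (b - a) * ∫ s in a..b, |g'' s| := by
  set σ := (g b - g a) / (b - a)
  have ha := Set.left_mem_Icc.2 hab.le
  have herr : g a + σ * (t - a) - g t = ∫ s in a..t, (σ - g' s) := by
    rw [intervalIntegral.integral_sub (by simp) (hg.intervalIntegrable ha ht),
      hg.integral_eq_sub ha ht, intervalIntegral.integral_const, smul_eq_mul]
    ring
  have hle := intervalIntegral.norm_integral_le_of_norm_le_const
    (a := a) (b := t) (f := fun s => σ - g' s) fun s hs => by
      rw [Set.uIoc_of_le ht.1] at hs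
      exact hg.abs_slope_sub_le hab hg' ⟨hs.1.le, hs.2.trans ht.2⟩
  rw [herr, mul_comm]
  refine hle.trans (mul_le_mul_of_nonneg_left ?_ (intervalIntegral.integral_nonneg hab.le
    fun _ _ => abs_nonneg _))
  rw [abs_of_nonneg (sub_nonneg.2 ht.1)]
  linarith [ht.2]

lemma integral_chord_sub_sq_le (hab : a < b) (hg : IsPrimitiveOn g g' a b) {g'' : ℝ → ℝ}
    (hg' : IsPrimitiveOn g' g'' a b) (hg'' : MemLp g'' 2 (volume.restrict (Set.Ioc a b))) :
    ∫ t in a..b, (g a + (g b - g a) / (b - a) * (t - a) - g t) ^ 2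
      ≤ (b - a) ^ 4 * ∫ t in a..b, g'' t ^ 2 := by
  have hb := sub_pos.2 hab
  set J := ∫ s in a..b, |g'' s|
  set Q := ∫ s in a..b, g'' s ^ 2
  have hJ0 : 0 ≤ J := intervalIntegral.integral_nonneg hab.le fun _ _ => abs_nonneg _
  have hQ0 : 0 ≤ Q := intervalIntegral.integral_nonneg hab.le fun _ _ => sq_nonneg _
  have hCauchySchwarz : J ≤ √Q * √(b - a) := by
    have := integral_abs_mul_abs_le hg'' (memLp_const (1 : ℝ))
    simpa only [abs_one, mul_one, one_pow, ← intervalIntegral.integral_of_le hab.le,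
      intervalIntegral.integral_const, smul_eq_mul] using this
  have hsup := intervalIntegral.norm_integral_le_of_norm_le_const (a := a) (b := b)
    (C := ((b - a) * J) ^ 2) (f := fun t => (g a + (g b - g a) / (b - a) * (t - a) - g t) ^ 2)
    fun t ht => by
      rw [Set.uIoc_of_le hab.le] at ht
      rw [norm_pow]
      exact pow_le_pow_left₀ (norm_nonneg _)
        (hg.abs_chord_sub_le hab hg' (Set.Ioc_subset_Icc_self ht)) 2
  rw [abs_of_pos hb] at hsup
  calc _ ≤ ((b - a) * J) ^ 2 * (b - a) := (le_abs_self _).trans hsup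
    _ ≤ ((b - a) * (√Q * √(b - a))) ^ 2 * (b - a) := by gcongr
    _ = (b - a) ^ 4 * Q := by
      rw [mul_pow, mul_pow, Real.sq_sqrt hQ0, Real.sq_sqrt hb.le]; ring

end IsPrimitiveOn

/-! ### The space `H¹(0,1)` and the bilinear form -/

namespace H1

/-- Pointwise difference in `H¹(0,1)`. -/
instance : Sub H1 where
  sub v w :=
    { val := v.val - w.val
      dval := v.dval - w.dval
      dval_meas := v.dval_meas.sub w.dval_meas
      dval_int := v.dval_int.sub w.dval_int
      dval_sq_int := intervalIntegrable_unit.2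
        ((memLp_two_of_sq_intervalIntegrable v.dval_meas v.dval_sq_int).sub
          (memLp_two_of_sq_intervalIntegrable w.dval_meas w.dval_sq_int)).integrable_sq
      ftc := (IsPrimitiveOn.sub ⟨v.dval_int, v.ftc⟩ ⟨w.dval_int, w.ftc⟩).2 }

@[simp] lemma sub_val (v w : H1) : (v - w).val = v.val - w.val := rfl

@[simp] lemma sub_dval (v w : H1) : (v - w).dval = v.dval - w.dval := rfl

lemma isPrimitiveOn (v : H1) : IsPrimitiveOn v.val v.dval 0 1 := ⟨v.dval_int, v.ftc⟩

lemma memLp_two_dval (v : H1) : MemLp v.dval 2 unitMeas :=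
  memLp_two_of_sq_intervalIntegrable v.dval_meas v.dval_sq_int

lemma integrable_dval (v : H1) : Integrable v.dval unitMeas :=
  v.memLp_two_dval.integrable one_le_two

lemma memLp_top_val (v : H1) : MemLp v.val ⊤ unitMeas := v.isPrimitiveOn.memLp_top

lemma memLp_two_val (v : H1) : MemLp v.val 2 unitMeas := v.memLp_top_val.mono_exponent le_top

lemma abs_val_le (v : H1) (h0 : v.val 0 = 0) {x : ℝ} (hx : x ∈ Set.Icc (0 : ℝ) 1) :
    |v.val x| ≤ L1 v.dval := by
  simpa only [h0, sub_zero, L1] using v.isPrimitiveOn.abs_sub_le hx (y := 0) (by simp)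

lemma L2_val_le_L1_dval (v : H1) (h0 : v.val 0 = 0) : L2 v.val ≤ L1 v.dval :=
  L2_le_of_abs_le fun _ hx => v.abs_val_le h0 hx

lemma L2_val_le_L2_dval (v : H1) (h0 : v.val 0 = 0) : L2 v.val ≤ L2 v.dval :=
  (v.L2_val_le_L1_dval h0).trans (L1_le_L2 v.memLp_two_dval)

lemma L2_sub_val_le (u v w : H1) : L2 (u - w).val ≤ L2 (u - v).val + L2 (v - w).val :=
  L2_sub_le u.memLp_two_val v.memLp_two_val w.memLp_two_val

lemma L1_sub_dval_le (u v w : H1) : L1 (u - w).dval ≤ L1 (u - v).dval + L1 (v - w).dval :=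
  L1_sub_le u.integrable_dval v.integrable_dval w.integrable_dval

end H1

namespace Coeffs

variable (P : Coeffs)

lemma isPrimitiveOn_a : IsPrimitiveOn P.a P.a' 0 1 := ⟨P.a'_int, P.ftc_a⟩
lemma isPrimitiveOn_b : IsPrimitiveOn P.b P.b' 0 1 := ⟨P.b'_int, P.ftc_b⟩
lemma memLp_top_a : MemLp P.a ⊤ unitMeas := P.isPrimitiveOn_a.memLp_top
lemma memLp_top_b : MemLp P.b ⊤ unitMeas := P.isPrimitiveOn_b.memLp_top
lemma memLp_top_c : MemLp P.c ⊤ unitMeas := memLp_top_of_ae_bdd P.c_meas P.c_bdd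
lemma memLp_top_a' : MemLp P.a' ⊤ unitMeas := memLp_top_of_ae_bdd P.a'_meas P.a'_bdd
lemma memLp_top_b' : MemLp P.b' ⊤ unitMeas := memLp_top_of_ae_bdd P.b'_meas P.b'_bdd

/-- `M` is a bound for `‖a‖_{W^{1,∞}}`, `‖b‖_{W^{1,∞}}` and `‖c‖_{L^∞}`. -/
structure BoundedBy (M : ℝ) : Prop where
  nonneg : 0 ≤ M
  abs_a_le : ∀ᵐ t ∂unitMeas, |P.a t| ≤ M
  abs_b_le : ∀ᵐ t ∂unitMeas, |P.b t| ≤ M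
  abs_c_le : ∀ᵐ t ∂unitMeas, |P.c t| ≤ M
  abs_a'_le : ∀ᵐ t ∂unitMeas, |P.a' t| ≤ M
  abs_b'_le : ∀ᵐ t ∂unitMeas, |P.b' t| ≤ M

lemma exists_boundedBy : ∃ M, P.BoundedBy M := by
  have hbound {g : ℝ → ℝ} (hg : MemLp g ⊤ unitMeas) {M : ℝ} (hM : lpNorm g ⊤ unitMeas ≤ M) :
      ∀ᵐ t ∂unitMeas, |g t| ≤ M := (ae_le_lpNorm_exponent_top hg).mono fun _ ht => ht.trans hM
  set n := fun g : ℝ → ℝ => lpNorm g ⊤ unitMeas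
  have hn0 (g : ℝ → ℝ) : 0 ≤ n g := lpNorm_nonneg
  refine ⟨n P.a + n P.b + n P.c + n P.a' + n P.b', ⟨?_, hbound P.memLp_top_a ?_,
    hbound P.memLp_top_b ?_, hbound P.memLp_top_c ?_, hbound P.memLp_top_a' ?_,
    hbound P.memLp_top_b' ?_⟩⟩ <;>
  linarith [hn0 P.a, hn0 P.b, hn0 P.c, hn0 P.a', hn0 P.b']

lemma integrable_a_mul_mul (u v : H1) :
    Integrable (fun t => P.a t * (u.dval t * v.dval t)) unitMeas :=
  (u.memLp_two_dval.integrable_mul v.memLp_two_dval).mul_of_top_right P.memLp_top_a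

lemma integrable_b_mul_mul (u v : H1) :
    Integrable (fun t => P.b t * (u.dval t * v.val t)) unitMeas :=
  (u.memLp_two_dval.integrable_mul v.memLp_two_val).mul_of_top_right P.memLp_top_b

lemma integrable_c_mul_mul (u v : H1) :
    Integrable (fun t => P.c t * (u.val t * v.val t)) unitMeas :=
  (u.memLp_two_val.integrable_mul v.memLp_two_val).mul_of_top_right P.memLp_top_c

/-- The convection and reaction terms `∫₀¹ (b u' v + c u v) dx` of `B(u, v)`. -/
def lowerOrder (u v : H1) : ℝ :=
  ∫ t, (P.b t * (u.dval t * v.val t) + P.c t * (u.val t * v.val t)) ∂unitMeas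

lemma integrable_lowerOrder (u v : H1) :
    Integrable (fun t => P.b t * (u.dval t * v.val t) + P.c t * (u.val t * v.val t)) unitMeas :=
  (P.integrable_b_mul_mul u v).add (P.integrable_c_mul_mul u v)

lemma B_eq_add_lowerOrder (u v : H1) :
    P.B u v = (∫ t, P.a t * (u.dval t * v.dval t) ∂unitMeas) + P.lowerOrder u v := by
  rw [B, integral_unit, lowerOrder,
    ← integral_add (P.integrable_a_mul_mul u v) (P.integrable_lowerOrder u v)]
  exact integral_congr_ae (Filter.Eventually.of_forall fun t => by ring)

lemma lowerOrder_sub_left (u v w : H1) :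
    P.lowerOrder (u - v) w = P.lowerOrder u w - P.lowerOrder v w := by
  rw [lowerOrder, lowerOrder, lowerOrder,
    ← integral_sub (P.integrable_lowerOrder u w) (P.integrable_lowerOrder v w)]
  refine integral_congr_ae (Filter.Eventually.of_forall fun t => ?_)
  simp only [H1.sub_val, H1.sub_dval, Pi.sub_apply]
  ring

lemma lowerOrder_sub_right (u v w : H1) :
    P.lowerOrder u (v - w) = P.lowerOrder u v - P.lowerOrder u w := by
  rw [lowerOrder, lowerOrder, lowerOrder,
    ← integral_sub (P.integrable_lowerOrder u v) (P.integrable_lowerOrder u w)]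
  refine integral_congr_ae (Filter.Eventually.of_forall fun t => ?_)
  simp only [H1.sub_val, Pi.sub_apply]
  ring

lemma B_sub_left (u v w : H1) : P.B (u - v) w = P.B u w - P.B v w := by
  have ha : ∫ t, P.a t * ((u - v).dval t * w.dval t) ∂unitMeas
      = (∫ t, P.a t * (u.dval t * w.dval t) ∂unitMeas)
        - ∫ t, P.a t * (v.dval t * w.dval t) ∂unitMeas := by
    rw [← integral_sub (P.integrable_a_mul_mul u w) (P.integrable_a_mul_mul v w)]
    exact integral_congr_ae (Filter.Eventually.of_forall fun t => by
      simp only [H1.sub_dval, Pi.sub_apply]; ring)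
  rw [B_eq_add_lowerOrder, B_eq_add_lowerOrder, B_eq_add_lowerOrder, ha, lowerOrder_sub_left]
  ring

variable {P}

lemma BoundedBy.abs_lowerOrder_le {M : ℝ} (hM : P.BoundedBy M) {u v : H1} (hu : u.val 0 = 0)
    (hv : v.val 0 = 0) : |P.lowerOrder u v| ≤ 2 * M * (L1 u.dval * L1 v.dval) := by
  have hvle := ae_unit_of_forall fun _ => v.abs_val_le hv
  have hb := abs_integral_mul_le hM.abs_b_le (u.memLp_two_dval.integrable_mul v.memLp_two_val)
  have hc := abs_integral_mul_le hM.abs_c_le (u.memLp_two_val.integrable_mul v.memLp_two_val)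
  have hbv : L1 (u.dval * v.val) ≤ L1 v.dval * L1 u.dval := by
    rw [mul_comm u.dval]; exact L1_mul_le_of_ae_abs_le hvle u.integrable_dval
  have hcv : L1 (u.val * v.val) ≤ L1 v.dval * L1 u.dval := by
    rw [mul_comm u.val]
    exact (L1_mul_le_of_ae_abs_le hvle (u.memLp_two_val.integrable one_le_two)).trans
      (mul_le_mul_of_nonneg_left ((L1_le_L2 u.memLp_two_val).trans (u.L2_val_le_L1_dval hu))
        (L1_nonneg _))
  rw [lowerOrder, integral_add (P.integrable_b_mul_mul u v) (P.integrable_c_mul_mul u v)]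
  calc _ ≤ M * L1 (u.dval * v.val) + M * L1 (u.val * v.val) :=
        (abs_add_le _ _).trans (add_le_add hb hc)
    _ ≤ M * (L1 v.dval * L1 u.dval) + M * (L1 v.dval * L1 u.dval) := by
        have := hM.nonneg; gcongr
    _ = _ := by ring

/-- Only `V' W' - z' w'` has to be small in `L¹`: in `lowerOrder` each factor without a derivative
is controlled by the `L¹` norm of its derivative. -/
lemma BoundedBy.abs_B_sub_B_le {M : ℝ} (hM : P.BoundedBy M) {V W z w : H1} (hV : V.val 0 = 0)
    (hW : W.val 0 = 0) (hz : z.val 0 = 0) (hw : w.val 0 = 0) :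
    |P.B V W - P.B z w| ≤ M * L1 (V.dval * W.dval - z.dval * w.dval)
      + 2 * M * (L1 (V - z).dval * L1 W.dval + L1 z.dval * L1 (W - w).dval) := by
  have ha : |(∫ t, P.a t * (V.dval t * W.dval t) ∂unitMeas)
      - ∫ t, P.a t * (z.dval t * w.dval t) ∂unitMeas|
        ≤ M * L1 (V.dval * W.dval - z.dval * w.dval) := by
    rw [← integral_sub (P.integrable_a_mul_mul V W) (P.integrable_a_mul_mul z w)]
    simp only [← mul_sub]
    exact abs_integral_mul_le hM.abs_a_le ((V.memLp_two_dval.integrable_mul W.memLp_two_dval).sub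
      (z.memLp_two_dval.integrable_mul w.memLp_two_dval))
  have hleft := hM.abs_lowerOrder_le (u := V - z) (v := W) (by simp [hV, hz]) hW
  have hright := hM.abs_lowerOrder_le (u := z) (v := W - w) hz (by simp [hW, hw])
  rw [lowerOrder_sub_left] at hleft
  rw [lowerOrder_sub_right] at hright
  rw [B_eq_add_lowerOrder, B_eq_add_lowerOrder]
  rw [abs_le] at *
  constructor <;> linarith [ha.1, ha.2, hleft.1, hleft.2, hright.1, hright.2]

variable (P)

lemma B_self_eq_energySq {v : H1} (h0 : v.val 0 = 0) (h1 : v.val 1 = 0) :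
    P.B v v = P.energySq v := by
  have hbvv := (P.isPrimitiveOn_b.mul zero_le_one v.isPrimitiveOn).mul zero_le_one v.isPrimitiveOn
  have hint := intervalIntegrable_unit.1 hbvv.1
  have hB : Integrable (fun t => P.a t * (v.dval t * v.dval t)
      + (P.b t * (v.dval t * v.val t) + P.c t * (v.val t * v.val t))) unitMeas :=
    (P.integrable_a_mul_mul v v).add (P.integrable_lowerOrder v v)
  have hzero : ∫ t, ((P.b' * v.val + P.b * v.dval) * v.val + P.b * v.val * v.dval) t ∂unitMeas
      = 0 := by
    rw [← integral_unit, hbvv.integral_eq_sub (by simp) (by simp)]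
    simp [h0, h1]
  rw [B_eq_add_lowerOrder, lowerOrder,
    ← integral_add (P.integrable_a_mul_mul v v) (P.integrable_lowerOrder v v), energySq,
    integral_unit, ← sub_zero (∫ t, _ ∂_), ← zero_div 2, ← hzero, ← integral_div,
    ← integral_sub hB (hint.div_const 2)]
  refine integral_congr_ae (Filter.Eventually.of_forall fun t => ?_)
  simp only [Pi.add_apply, Pi.mul_apply]
  ring

lemma a0_mul_L2_sq_le_energySq (v : H1) : P.a0 * L2 v.dval ^ 2 ≤ P.energySq v := by
  have hcb := P.cb_nonneg
  rw [restrict_Ioo_eq_unitMeas] at hcb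
  have hcb_top : MemLp (fun t => P.c t - P.b' t / 2) ⊤ unitMeas := by
    simpa only [div_eq_mul_inv] using! P.memLp_top_c.sub (P.memLp_top_b'.mul_const 2⁻¹)
  rw [L2_sq, energySq, integral_unit, ← integral_const_mul]
  refine integral_mono_ae (v.memLp_two_dval.integrable_sq.const_mul _)
    ((v.memLp_two_dval.integrable_sq.mul_of_top_right P.memLp_top_a).add
      (v.memLp_two_val.integrable_sq.mul_of_top_right hcb_top)) ?_
  filter_upwards [hcb, ae_unit_of_forall P.a_lb] with t hcb_t ha_t
  exact (mul_le_mul_of_nonneg_right ha_t (sq_nonneg _)).trans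
    (le_add_of_nonneg_right (mul_nonneg hcb_t (sq_nonneg _)))

lemma L2_dval_le_div_a0 {v : H1} (h0 : v.val 0 = 0) (h1 : v.val 1 = 0) {r : ℝ} (hr : 0 ≤ r)
    (hB : P.B v v ≤ r * L2 v.dval) : L2 v.dval ≤ r / P.a0 := by
  rw [P.B_self_eq_energySq h0 h1] at hB
  have hcoercive := (P.a0_mul_L2_sq_le_energySq v).trans hB
  rw [le_div_iff₀ P.a0_pos]
  rcases (L2_nonneg v.dval).eq_or_lt with hz | hpos
  · rwa [← hz, zero_mul]
  · exact le_of_mul_le_mul_right (by linarith) hpos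

end Coeffs

lemma MemL2.memLp_two {f : ℝ → ℝ} (hf : MemL2 f) : MemLp f 2 unitMeas :=
  memLp_two_of_sq_intervalIntegrable hf.1 hf.2

lemma MemL2.integrable_mul_val {f : ℝ → ℝ} (hf : MemL2 f) (v : H1) :
    Integrable (fun t => f t * v.val t) unitMeas := hf.memLp_two.integrable_mul v.memLp_two_val

lemma ip_sub {f : ℝ → ℝ} (hf : MemL2 f) (v w : H1) : ip f (v - w) = ip f v - ip f w := by
  rw [ip, ip, ip, integral_unit, integral_unit, integral_unit,
    ← integral_sub (hf.integrable_mul_val v) (hf.integrable_mul_val w)]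
  exact integral_congr_ae (Filter.Eventually.of_forall fun t => mul_sub _ _ _)

lemma abs_ip_le {f : ℝ → ℝ} (hf : MemL2 f) (v : H1) : |ip f v| ≤ L2 f * L2 v.val := by
  rw [ip, integral_unit]
  exact (abs_integral_le_L1 _).trans (L1_mul_le_L2_mul_L2 hf.memLp_two v.memLp_two_val)

namespace Coeffs.IsFESolution

variable {P : Coeffs} {f : ℝ → ℝ} {N : ℕ} {m : Mesh N} {uh : H1}

lemma energySq_eq_ip (h : P.IsFESolution f m uh) : P.energySq uh = ip f uh := by
  rw [← P.B_self_eq_energySq h.1 h.2.1, h.2.2.2 uh h.1 h.2.1 h.2.2.1]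

lemma L2_dval_le (h : P.IsFESolution f m uh) (hf : MemL2 f) : L2 uh.dval ≤ L2 f / P.a0 := by
  refine P.L2_dval_le_div_a0 h.1 h.2.1 (L2_nonneg f) ?_
  rw [h.2.2.2 uh h.1 h.2.1 h.2.2.1]
  exact ((le_abs_self _).trans (abs_ip_le hf uh)).trans
    (mul_le_mul_of_nonneg_left (uh.L2_val_le_L2_dval h.1) (L2_nonneg f))

lemma abs_energySq_sub_le {N' : ℕ} {m' : Mesh N'} {uh' : H1} (h : P.IsFESolution f m uh)
    (h' : P.IsFESolution f m' uh') (hf : MemL2 f) :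
    |P.energySq uh - P.energySq uh'| ≤ L2 f * L2 (uh - uh').val := by
  rw [h.energySq_eq_ip, h'.energySq_eq_ip, ← ip_sub hf]
  exact abs_ip_le hf _

end Coeffs.IsFESolution

namespace Mesh

variable {N : ℕ} (m : Mesh N)

lemma x_le {i j : ℕ} (hij : i ≤ j) (hj : j ≤ N) : m.x i ≤ m.x j := by
  induction j, hij using Nat.le_induction with
  | base => exact le_rfl
  | succ k _ ih => exact (ih (by omega)).trans (m.x_mono k (by omega)).le

lemma x_mem {i : ℕ} (hi : i ≤ N) : m.x i ∈ Set.Icc (0 : ℝ) 1 :=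
  ⟨m.x_zero ▸ m.x_le (Nat.zero_le i) hi, m.x_last ▸ m.x_le hi le_rfl⟩

lemma h_pos {i : ℕ} (hi : i < N) : 0 < m.h i := sub_pos.2 (m.x_mono i hi)

include m in
lemma N_pos : 0 < N :=
  Nat.pos_of_ne_zero fun h => zero_ne_one (m.x_zero.symm.trans (h ▸ m.x_last))

lemma Icc_subset_unit {i : ℕ} (hi : i < N) :
    Set.Icc (m.x i) (m.x (i + 1)) ⊆ Set.Icc (0 : ℝ) 1 :=
  Set.Icc_subset_Icc (m.x_mem hi.le).1 (m.x_mem hi).2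

lemma exists_mem_Ioc {t : ℝ} (ht : t ∈ Set.Ioc (0 : ℝ) 1) :
    ∃ i < N, t ∈ Set.Ioc (m.x i) (m.x (i + 1)) := by
  classical
  have hex : ∃ j, t ≤ m.x j := ⟨N, m.x_last ▸ ht.2⟩
  have hle := Nat.find_spec hex
  have hN : Nat.find hex ≤ N := Nat.find_min' hex (m.x_last ▸ ht.2)
  have hpos : Nat.find hex ≠ 0 := fun h0 => by
    rw [h0, m.x_zero] at hle
    exact ht.1.not_ge hle
  obtain ⟨i, hi⟩ := Nat.exists_eq_succ_of_ne_zero hpos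
  rw [hi] at hle
  exact ⟨i, by omega, lt_of_not_ge (Nat.find_min hex (by omega)), hle⟩

lemma sum_integral_elem {g : ℝ → ℝ} (hg : Integrable g unitMeas) {j : ℕ} (hj : j ≤ N) :
    ∑ i ∈ Finset.range j, ∫ t in (m.x i)..(m.x (i + 1)), g t = ∫ t in (0 : ℝ)..(m.x j), g t := by
  rw [intervalIntegral.sum_integral_adjacent_intervals fun k hk => ?_, m.x_zero]
  refine (intervalIntegrable_unit.2 hg).mono_set ?_
  rw [Set.uIcc_of_le zero_le_one]
  exact Set.uIcc_subset_Icc (m.x_mem (by omega)) (m.x_mem (by omega))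

lemma integral_unit_eq_sum {g : ℝ → ℝ} (hg : Integrable g unitMeas) :
    ∫ t, g t ∂unitMeas = ∑ i ∈ Finset.range N, ∫ t in (m.x i)..(m.x (i + 1)), g t := by
  rw [m.sum_integral_elem hg le_rfl, m.x_last, integral_unit]

lemma integral_elem_congr {g k : ℝ → ℝ} {i : ℕ} (hi : i < N)
    (h : ∀ t ∈ Set.Ioo (m.x i) (m.x (i + 1)), g t = k t) :
    ∫ t in (m.x i)..(m.x (i + 1)), g t = ∫ t in (m.x i)..(m.x (i + 1)), k t := by
  rw [intervalIntegral.integral_of_le (m.x_mono i hi).le,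
    intervalIntegral.integral_of_le (m.x_mono i hi).le, integral_Ioc_eq_integral_Ioo,
    integral_Ioc_eq_integral_Ioo]
  exact setIntegral_congr_fun measurableSet_Ioo h

/-! ### Piecewise constant functions -/

/-- The piecewise constant function with value `σ i` on the element of index `i`. Elements are
taken half-open, so that they partition `(0, 1]`. -/
def pc (σ : ℕ → ℝ) (t : ℝ) : ℝ :=
  ∑ i ∈ Finset.range N, σ i * (Set.Ioc (m.x i) (m.x (i + 1))).indicator 1 t

lemma pc_eq (σ : ℕ → ℝ) {i : ℕ} (hi : i < N) {t : ℝ} (ht : t ∈ Set.Ioc (m.x i) (m.x (i + 1))) :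
    m.pc σ t = σ i := by
  rw [pc, Finset.sum_eq_single_of_mem i (Finset.mem_range.2 hi) fun j hj hji => ?_,
    Set.indicator_of_mem ht, Pi.one_apply, mul_one]
  rw [Set.indicator_of_notMem, mul_zero]
  intro htj
  rcases lt_or_gt_of_ne hji with hlt | hlt
  · exact (htj.2.trans (m.x_le hlt hi.le)).not_gt ht.1
  · exact (ht.2.trans (m.x_le hlt (Finset.mem_range.1 hj).le)).not_gt htj.1

lemma exists_pc_eq {t : ℝ} (ht : t ∈ Set.Ioc (0 : ℝ) 1) : ∃ i < N, ∀ σ, m.pc σ t = σ i := by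
  obtain ⟨i, hi, hti⟩ := m.exists_mem_Ioc ht
  exact ⟨i, hi, fun σ => m.pc_eq σ hi hti⟩

lemma measurable_pc (σ : ℕ → ℝ) : Measurable (m.pc σ) :=
  Finset.measurable_fun_sum _ fun _ _ =>
    (measurable_const.indicator measurableSet_Ioc).const_mul _

lemma memLp_top_pc (σ : ℕ → ℝ) : MemLp (m.pc σ) ⊤ unitMeas := by
  refine memLp_top_of_bound (m.measurable_pc σ).aestronglyMeasurable
    (∑ i ∈ Finset.range N, |σ i|) (ae_restrict_of_forall_mem measurableSet_Ioc fun t ht => ?_)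
  obtain ⟨i, hi, hσ⟩ := m.exists_pc_eq ht
  rw [hσ, Real.norm_eq_abs]
  exact Finset.single_le_sum (f := fun i => |σ i|) (fun _ _ => abs_nonneg _)
    (Finset.mem_range.2 hi)

lemma memLp_pc (σ : ℕ → ℝ) {p : ENNReal} : MemLp (m.pc σ) p unitMeas :=
  (m.memLp_top_pc σ).mono_exponent le_top

lemma integrable_pc (σ : ℕ → ℝ) : Integrable (m.pc σ) unitMeas :=
  (m.memLp_pc σ).integrable le_rfl

lemma integral_pc (σ : ℕ → ℝ) {j : ℕ} (hj : j ≤ N) :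
    ∫ t in (0 : ℝ)..(m.x j), m.pc σ t = ∑ i ∈ Finset.range j, m.h i * σ i := by
  rw [← m.sum_integral_elem (m.integrable_pc σ) hj]
  refine Finset.sum_congr rfl fun i hi => ?_
  have hiN : i < N := (Finset.mem_range.1 hi).trans_le hj
  rw [m.integral_elem_congr hiN fun t ht => m.pc_eq σ hiN (Set.Ioo_subset_Ioc_self ht),
    intervalIntegral.integral_const, smul_eq_mul, h]

lemma L1_pc (σ : ℕ → ℝ) : L1 (m.pc σ) = ∑ i ∈ Finset.range N, m.h i * |σ i| := by
  rw [L1, ← m.integral_pc (fun i => |σ i|) le_rfl, m.x_last, integral_unit, integral_unit]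
  refine setIntegral_congr_fun measurableSet_Ioc fun t ht => ?_
  obtain ⟨i, -, hσ⟩ := m.exists_pc_eq ht
  simp only [hσ]

lemma L2_sq_pc (σ : ℕ → ℝ) : L2 (m.pc σ) ^ 2 = ∑ i ∈ Finset.range N, m.h i * σ i ^ 2 := by
  rw [L2_sq, ← m.integral_pc (fun i => σ i ^ 2) le_rfl, m.x_last, integral_unit]
  refine setIntegral_congr_fun measurableSet_Ioc fun t ht => ?_
  obtain ⟨i, -, hσ⟩ := m.exists_pc_eq ht
  simp only [hσ]

lemma pc_mul_ae (σ τ : ℕ → ℝ) : m.pc σ * m.pc τ =ᵐ[unitMeas] m.pc (σ * τ) := by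
  refine ae_restrict_of_forall_mem measurableSet_Ioc fun t ht => ?_
  obtain ⟨i, -, hσ⟩ := m.exists_pc_eq ht
  simp only [Pi.mul_apply, hσ]

lemma integral_mul_pc {g g' : ℝ → ℝ} (hg : IsPrimitiveOn g g' 0 1) (σ : ℕ → ℝ) :
    ∫ t, g' t * m.pc σ t ∂unitMeas
      = ∑ i ∈ Finset.range N, σ i * (g (m.x (i + 1)) - g (m.x i)) := by
  have hint : Integrable (fun t => g' t * m.pc σ t) unitMeas :=
    (intervalIntegrable_unit.1 hg.1).mul_of_top_left (m.memLp_top_pc σ)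
  rw [m.integral_unit_eq_sum hint]
  refine Finset.sum_congr rfl fun i hi => ?_
  have hiN : i < N := Finset.mem_range.1 hi
  rw [m.integral_elem_congr (k := fun t => σ i * g' t) hiN fun t ht => by
      rw [m.pc_eq σ hiN (Set.Ioo_subset_Ioc_self ht), mul_comm],
    intervalIntegral.integral_const_mul, hg.integral_eq_sub (m.x_mem hiN.le) (m.x_mem hiN)]

/-! ### Piecewise linear functions -/

variable {m} in
lemma IsPL.sub {v w : H1} (hv : m.IsPL v) (hw : m.IsPL w) : m.IsPL (v - w) := fun i hi => by
  obtain ⟨s, hs⟩ := hv i hi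
  obtain ⟨r, hr⟩ := hw i hi
  exact ⟨s - r, fun t ht => congrArg₂ (· - ·) (hs t ht) (hr t ht)⟩

/-- The slopes of the continuous piecewise linear function with nodal values `ν`. -/
def slope (ν : ℕ → ℝ) (i : ℕ) : ℝ := (ν (i + 1) - ν i) / m.h i

lemma h_mul_slope (ν : ℕ → ℝ) {i : ℕ} (hi : i < N) : m.h i * m.slope ν i = ν (i + 1) - ν i :=
  mul_div_cancel₀ _ (m.h_pos hi).ne'

variable {m} in
lemma IsPL.dval_ae_eq {v : H1} (hv : m.IsPL v) :
    v.dval =ᵐ[unitMeas] m.pc (m.slope (v.val ∘ m.x)) := by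
  have hnull : ∀ᵐ t ∂unitMeas, t ∉ Set.range m.x :=
    ae_restrict_of_ae ((Set.countable_range m.x).ae_notMem _)
  filter_upwards [hnull, ae_restrict_mem measurableSet_Ioc] with t hnode ht
  obtain ⟨i, hi, hti⟩ := m.exists_mem_Ioc ht
  obtain ⟨s, hs⟩ := hv i hi
  have hslope : m.h i * s = v.val (m.x (i + 1)) - v.val (m.x i) := by
    rw [← v.isPrimitiveOn.integral_eq_sub (m.x_mem hi.le) (m.x_mem hi),
      m.integral_elem_congr hi hs, intervalIntegral.integral_const, smul_eq_mul, h]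
  rw [m.pc_eq _ hi hti, hs t ⟨hti.1, hti.2.lt_of_ne fun heq => hnode ⟨i + 1, heq.symm⟩⟩,
    slope, eq_div_iff (m.h_pos hi).ne', mul_comm, hslope, Function.comp, Function.comp]

/-- The continuous piecewise linear function with nodal values `ν 0, …, ν N`. With `ν = g ∘ m.x` it
is the piecewise linear interpolant of `g`. -/
def nodal (ν : ℕ → ℝ) : H1 where
  val x := ν 0 + ∫ t in (0 : ℝ)..x, m.pc (m.slope ν) t
  dval := m.pc (m.slope ν)
  dval_meas := m.measurable_pc _
  dval_int := intervalIntegrable_unit.2 (m.integrable_pc _)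
  dval_sq_int := intervalIntegrable_unit.2 (m.memLp_pc _).integrable_sq
  ftc x _ := by rw [intervalIntegral.integral_same, add_zero]

lemma isPL_nodal (ν : ℕ → ℝ) : m.IsPL (m.nodal ν) := fun i hi =>
  ⟨m.slope ν i, fun _ ht => m.pc_eq _ hi (Set.Ioo_subset_Ioc_self ht)⟩

lemma nodal_val_x (ν : ℕ → ℝ) {j : ℕ} (hj : j ≤ N) : (m.nodal ν).val (m.x j) = ν j := by
  have hsum : ∑ i ∈ Finset.range j, m.h i * m.slope ν i = ν j - ν 0 := by
    rw [← Finset.sum_range_sub ν j]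
    exact Finset.sum_congr rfl fun i hi =>
      m.h_mul_slope ν ((Finset.mem_range.1 hi).trans_le hj)
  rw [(m.nodal ν).ftc _ (m.x_mem hj)]
  simp only [nodal, intervalIntegral.integral_same, add_zero, m.integral_pc _ hj, hsum,
    add_sub_cancel]

lemma nodal_val_zero (ν : ℕ → ℝ) : (m.nodal ν).val 0 = ν 0 := by
  simpa only [m.x_zero] using m.nodal_val_x ν (Nat.zero_le N)

lemma nodal_val_one (ν : ℕ → ℝ) : (m.nodal ν).val 1 = ν N := by
  simpa only [m.x_last] using m.nodal_val_x ν le_rfl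

lemma nodal_val_eq_chord (ν : ℕ → ℝ) {i : ℕ} (hi : i < N) {t : ℝ}
    (ht : t ∈ Set.Icc (m.x i) (m.x (i + 1))) :
    (m.nodal ν).val t = ν i + m.slope ν i * (t - m.x i) := by
  have hconst : ∫ s in (m.x i)..t, m.pc (m.slope ν) s = ∫ _ in (m.x i)..t, m.slope ν i :=
    intervalIntegral.integral_congr_ae (Filter.Eventually.of_forall fun s hs => by
      rw [Set.uIoc_of_le ht.1] at hs
      exact m.pc_eq _ hi ⟨hs.1, hs.2.trans ht.2⟩)
  have hsub := (m.nodal ν).isPrimitiveOn.integral_eq_sub (m.x_mem hi.le) (m.Icc_subset_unit hi ht)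
  rw [m.nodal_val_x ν hi.le] at hsub
  rw [← sub_eq_iff_eq_add', ← hsub]
  exact hconst.trans (by rw [intervalIntegral.integral_const, smul_eq_mul, mul_comm])

/-! ### `L²` error of the finite element solution -/

lemma L2_nodal_sub_le {u : H1} {u'' : ℝ → ℝ} (hu : IsPrimitiveOn u.dval u'' 0 1)
    (hu2 : MemLp u'' 2 unitMeas) {H : ℝ} (hH : ∀ i < N, m.h i ≤ H) :
    L2 (m.nodal (u.val ∘ m.x) - u).val ≤ H ^ 2 * L2 u'' := by
  set v := m.nodal (u.val ∘ m.x)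
  have helem : ∀ i < N, ∫ t in (m.x i)..(m.x (i + 1)), (v - u).val t ^ 2
      ≤ H ^ 4 * ∫ t in (m.x i)..(m.x (i + 1)), u'' t ^ 2 := fun i hi => by
    have hle := IsPrimitiveOn.integral_chord_sub_sq_le (m.x_mono i hi)
      (u.isPrimitiveOn.mono (m.x_mem hi.le) (m.x_mem hi)) (hu.mono (m.x_mem hi.le) (m.x_mem hi))
      (hu2.mono_measure (Measure.restrict_mono
        (Set.Ioc_subset_Ioc (m.x_mem hi.le).1 (m.x_mem hi).2) le_rfl))
    rw [m.integral_elem_congr hi fun t ht => by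
      rw [H1.sub_val, Pi.sub_apply, m.nodal_val_eq_chord _ hi (Set.Ioo_subset_Icc_self ht)]]
    refine hle.trans (mul_le_mul_of_nonneg_right
      (pow_le_pow_left₀ (m.h_pos hi).le (hH i hi) 4)
      (intervalIntegral.integral_nonneg (m.x_mono i hi).le fun _ _ => sq_nonneg _))
  refine le_of_sq_le_sq ?_ (mul_nonneg (sq_nonneg H) (L2_nonneg _))
  rw [mul_pow, ← pow_mul, L2_sq, L2_sq, m.integral_unit_eq_sum (v - u).memLp_two_val.integrable_sq,
    m.integral_unit_eq_sum hu2.integrable_sq, Finset.mul_sum]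
  exact Finset.sum_le_sum fun i hi => helem i (Finset.mem_range.1 hi)

lemma integral_mul_deriv_mul_pc {g g' e e' : ℝ → ℝ} (hg : IsPrimitiveOn g g' 0 1)
    (he : IsPrimitiveOn e e' 0 1) (hnode : ∀ i ≤ N, e (m.x i) = 0) (σ : ℕ → ℝ) :
    ∫ t, g t * (e' t * m.pc σ t) ∂unitMeas = -∫ t, g' t * (e t * m.pc σ t) ∂unitMeas := by
  have hint_g' : Integrable (fun t => g' t * (e t * m.pc σ t)) unitMeas :=
    (intervalIntegrable_unit.1 hg.1).mul_of_top_left ((m.memLp_top_pc σ).mul he.memLp_top)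
  have hint_e' : Integrable (fun t => g t * (e' t * m.pc σ t)) unitMeas :=
    ((intervalIntegrable_unit.1 he.1).mul_of_top_left (m.memLp_top_pc σ)).mul_of_top_right
      hg.memLp_top
  have hzero := m.integral_mul_pc (hg.mul zero_le_one he) σ
  rw [Finset.sum_eq_zero fun i hi => by
    simp [hnode i (Finset.mem_range.1 hi).le, hnode (i + 1) (Finset.mem_range.1 hi)]] at hzero
  rw [eq_neg_iff_add_eq_zero, add_comm, ← integral_add hint_g' hint_e', ← hzero]
  refine integral_congr_ae (Filter.Eventually.of_forall fun t => ?_)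
  simp only [Pi.add_apply, Pi.mul_apply]
  ring

end Mesh

namespace Coeffs

variable {P : Coeffs} {M : ℝ}

lemma lowerOrder_eq_of_val_zero {e w : H1} (he0 : e.val 0 = 0) (he1 : e.val 1 = 0) :
    P.lowerOrder e w = (∫ t, P.c t * (e.val t * w.val t) ∂unitMeas)
      - (∫ t, P.b' t * (e.val t * w.val t) ∂unitMeas)
      - ∫ t, P.b t * (e.val t * w.dval t) ∂unitMeas := by
  have hprim := (P.isPrimitiveOn_b.mul zero_le_one w.isPrimitiveOn).mul zero_le_one e.isPrimitiveOn
  have hzero := hprim.integral_eq_sub (x := 0) (y := 1) (by simp) (by simp)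
  rw [Pi.mul_apply, Pi.mul_apply _ _ (0 : ℝ), he0, he1, mul_zero, mul_zero, sub_zero,
    integral_unit] at hzero
  have hc := P.integrable_c_mul_mul e w
  have hb' : Integrable (fun t => P.b' t * (e.val t * w.val t)) unitMeas :=
    (e.memLp_two_val.integrable_mul w.memLp_two_val).mul_of_top_right P.memLp_top_b'
  have hb : Integrable (fun t => P.b t * (e.val t * w.dval t)) unitMeas :=
    (e.memLp_two_val.integrable_mul w.memLp_two_dval).mul_of_top_right P.memLp_top_b
  rw [← integral_sub' hc hb', ← integral_sub' (hc.sub hb') hb, ← sub_eq_zero, lowerOrder,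
    ← integral_sub' (P.integrable_lowerOrder e w) ((hc.sub hb').sub hb), ← hzero]
  refine integral_congr_ae (Filter.Eventually.of_forall fun t => ?_)
  simp only [Pi.add_apply, Pi.sub_apply, Pi.mul_apply]
  ring

/-- Since `w'` is piecewise constant, `∫ a e' w'` can be integrated by parts on each element, and
no derivative falls on `e`. -/
lemma BoundedBy.abs_B_le_of_val_x_eq_zero (hM : P.BoundedBy M) {N : ℕ} {m : Mesh N} {e w : H1}
    (hnode : ∀ i ≤ N, e.val (m.x i) = 0) (hw : m.IsPL w) (hw0 : w.val 0 = 0) :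
    |P.B e w| ≤ 4 * M * (L2 e.val * L2 w.dval) := by
  have he0 : e.val 0 = 0 := m.x_zero ▸ hnode 0 (Nat.zero_le N)
  have he1 : e.val 1 = 0 := m.x_last ▸ hnode N le_rfl
  have ha : ∫ t, P.a t * (e.dval t * w.dval t) ∂unitMeas
      = -∫ t, P.a' t * (e.val t * w.dval t) ∂unitMeas := by
    have hparts := m.integral_mul_deriv_mul_pc P.isPrimitiveOn_a e.isPrimitiveOn hnode
      (m.slope (w.val ∘ m.x))
    convert hparts using 1
    · exact integral_congr_ae (hw.dval_ae_eq.mono fun t ht => by simp only [ht])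
    · exact congrArg _ (integral_congr_ae (hw.dval_ae_eq.mono fun t ht => by simp only [ht]))
  have hed := e.memLp_two_val.integrable_mul w.memLp_two_dval
  have hev := e.memLp_two_val.integrable_mul w.memLp_two_val
  have hed_le : L1 (e.val * w.dval) ≤ L2 e.val * L2 w.dval :=
    L1_mul_le_L2_mul_L2 e.memLp_two_val w.memLp_two_dval
  have hev_le : L1 (e.val * w.val) ≤ L2 e.val * L2 w.dval :=
    (L1_mul_le_L2_mul_L2 e.memLp_two_val w.memLp_two_val).trans
      (mul_le_mul_of_nonneg_left (w.L2_val_le_L2_dval hw0) (L2_nonneg _))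
  rw [B_eq_add_lowerOrder, lowerOrder_eq_of_val_zero he0 he1, ha]
  have ha' := (abs_integral_mul_le hM.abs_a'_le hed).trans
    (mul_le_mul_of_nonneg_left hed_le hM.nonneg)
  have hb := (abs_integral_mul_le hM.abs_b_le hed).trans
    (mul_le_mul_of_nonneg_left hed_le hM.nonneg)
  have hb' := (abs_integral_mul_le hM.abs_b'_le hev).trans
    (mul_le_mul_of_nonneg_left hev_le hM.nonneg)
  have hc := (abs_integral_mul_le hM.abs_c_le hev).trans
    (mul_le_mul_of_nonneg_left hev_le hM.nonneg)
  simp only [Pi.mul_apply, abs_le] at *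
  constructor <;> linarith [ha'.1, ha'.2, hb.1, hb.2, hb'.1, hb'.2, hc.1, hc.2]

lemma IsFESolution.L2_sub_val_le {f : ℝ → ℝ} {N : ℕ} {m : Mesh N} {uh u : H1}
    (h : P.IsFESolution f m uh) (hM : P.BoundedBy M) (hu : P.IsWeakSolution f u) {u'' : ℝ → ℝ}
    (hu' : IsPrimitiveOn u.dval u'' 0 1) (hu2 : MemLp u'' 2 unitMeas) {H : ℝ}
    (hH : ∀ i < N, m.h i ≤ H) :
    L2 (uh - u).val ≤ (4 * M / P.a0 + 1) * (H ^ 2 * L2 u'') := by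
  have hM0 := hM.nonneg
  have ha0 := P.a0_pos
  set v := m.nodal (u.val ∘ m.x) with hv
  set w := uh - v with hw
  have hv0 : v.val 0 = 0 := by rw [hv, m.nodal_val_zero, Function.comp, m.x_zero, hu.1]
  have hv1 : v.val 1 = 0 := by rw [hv, m.nodal_val_one, Function.comp, m.x_last, hu.2.1]
  have hw0 : w.val 0 = 0 := by simp [hw, h.1, hv0]
  have hw1 : w.val 1 = 0 := by simp [hw, h.2.1, hv1]
  have hwPL : m.IsPL w := h.2.2.1.sub (m.isPL_nodal _)
  have hinterp := m.L2_nodal_sub_le hu' hu2 hH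
  rw [← hv] at hinterp
  have horth : P.B w w = -P.B (v - u) w := by
    rw [hw, P.B_sub_left, P.B_sub_left, ← hw, h.2.2.2 w hw0 hw1 hwPL, hu.2.2 w hw0 hw1]
    ring
  have hconsistency := hM.abs_B_le_of_val_x_eq_zero (e := v - u) (m := m)
    (fun i hi => by simp [hv, m.nodal_val_x _ hi]) hwPL hw0
  have hdiscrete : L2 w.dval ≤ 4 * M * L2 (v - u).val / P.a0 := by
    refine P.L2_dval_le_div_a0 hw0 hw1 (by have := L2_nonneg (v - u).val; positivity) ?_
    rw [horth, mul_assoc]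
    exact (neg_le_abs _).trans hconsistency
  calc L2 (uh - u).val ≤ L2 w.val + L2 (v - u).val := H1.L2_sub_val_le uh v u
    _ ≤ 4 * M * L2 (v - u).val / P.a0 + L2 (v - u).val := by
      gcongr; exact (w.L2_val_le_L2_dval hw0).trans hdiscrete
    _ = (4 * M / P.a0 + 1) * L2 (v - u).val := by ring
    _ ≤ _ := by gcongr

lemma exists_L2_sub_val_le {f : ℝ → ℝ} {u : H1} (hu : P.IsWeakSolution f u) (hu2 : u.IsH2) :
    ∃ K : ℝ, ∀ (N : ℕ) (m : Mesh N) (uh : H1), P.IsFESolution f m uh →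
      ∀ H : ℝ, (∀ i < N, m.h i ≤ H) → L2 (uh - u).val ≤ K * H ^ 2 := by
  obtain ⟨M, hM⟩ := P.exists_boundedBy
  obtain ⟨u'', hmeas, hint, hsq, hftc⟩ := hu2
  refine ⟨(4 * M / P.a0 + 1) * L2 u'', fun N m uh h H hH => ?_⟩
  exact (h.L2_sub_val_le hM hu ⟨hint, hftc⟩
    (memLp_two_of_sq_intervalIntegrable hmeas hsq) hH).trans_eq (by ring)

end Coeffs

/-! ### Functions with the same nodal values on nearby meshes -/

lemma abs_indicator_Ioc_sub_le (a b c d t : ℝ) :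
    |(Set.Ioc a b).indicator (1 : ℝ → ℝ) t - (Set.Ioc c d).indicator 1 t|
      ≤ (Set.uIoc a c).indicator 1 t + (Set.uIoc b d).indicator 1 t := by
  classical
  simp only [Set.indicator_apply, Set.mem_uIoc, Set.mem_Ioc, Pi.one_apply]
  split_ifs <;> norm_num <;> grind

lemma integrable_indicator_one {s : Set ℝ} (hs : MeasurableSet s) :
    Integrable (s.indicator (1 : ℝ → ℝ)) unitMeas :=
  (integrable_const (1 : ℝ)).indicator hs

lemma integral_indicator_uIoc_le (a c : ℝ) :
    ∫ t, (Set.uIoc a c).indicator 1 t ∂unitMeas ≤ |a - c| := by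
  rw [integral_indicator_one measurableSet_uIoc, Measure.real, abs_sub_comm,
    ← ENNReal.toReal_ofReal (abs_nonneg (c - a)), ← Real.volume_uIoc]
  exact ENNReal.toReal_mono (by simp) (Measure.restrict_apply_le _ _)

lemma L1_indicator_Ioc_sub_le (a b c d : ℝ) :
    L1 ((Set.Ioc a b).indicator 1 - (Set.Ioc c d).indicator 1) ≤ |a - c| + |b - d| := by
  have hac := integrable_indicator_one (measurableSet_uIoc (a := a) (b := c))
  have hbd := integrable_indicator_one (measurableSet_uIoc (a := b) (b := d))
  rw [L1_eq_integral_unitMeas]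
  refine (integral_mono_of_nonneg (Filter.Eventually.of_forall fun _ => abs_nonneg _)
    (hac.add hbd) (Filter.Eventually.of_forall (abs_indicator_Ioc_sub_le a b c d))).trans ?_
  rw [integral_add' hac hbd]
  exact add_le_add (integral_indicator_uIoc_le a c) (integral_indicator_uIoc_le b d)

namespace Mesh

variable {N : ℕ} (m m' : Mesh N)

lemma abs_x_sub_le_meshDist {i : ℕ} (hi : i ≤ N) : |m.x i - m'.x i| ≤ meshDist m m' :=
  Finset.le_sup' (fun i => |m.x i - m'.x i|) (Finset.mem_range.2 (Nat.lt_succ_of_le hi))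

lemma meshDist_nonneg : 0 ≤ meshDist m m' :=
  (abs_nonneg _).trans (m.abs_x_sub_le_meshDist m' (Nat.zero_le N))

lemma abs_h_sub_le {i : ℕ} (hi : i < N) : |m'.h i - m.h i| ≤ 2 * meshDist m m' := by
  have hleft := abs_le.1 (m.abs_x_sub_le_meshDist m' hi.le)
  have hright := abs_le.1 (m.abs_x_sub_le_meshDist m' hi)
  rw [abs_le, h, h]
  constructor <;> linarith [hleft.1, hleft.2, hright.1, hright.2]

lemma pc_sub (σ τ : ℕ → ℝ) : m.pc (σ - τ) = m.pc σ - m.pc τ := by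
  funext t
  simp only [pc, Pi.sub_apply, sub_mul, Finset.sum_sub_distrib]

lemma L1_pc_sub_pc_self_le (σ : ℕ → ℝ) :
    L1 (m.pc σ - m'.pc σ) ≤ 2 * meshDist m m' * ∑ i ∈ Finset.range N, |σ i| := by
  set χ : ℕ → ℝ → ℝ := fun i =>
    (Set.Ioc (m.x i) (m.x (i + 1))).indicator 1 - (Set.Ioc (m'.x i) (m'.x (i + 1))).indicator 1
  have hχint (i : ℕ) : Integrable (fun t => |σ i| * |χ i t|) unitMeas :=
    ((integrable_indicator_one measurableSet_Ioc).sub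
      (integrable_indicator_one measurableSet_Ioc)).abs.const_mul _
  have hχ : ∀ i < N, L1 (χ i) ≤ 2 * meshDist m m' := fun i hi => by
    linarith [L1_indicator_Ioc_sub_le (m.x i) (m.x (i + 1)) (m'.x i) (m'.x (i + 1)),
      m.abs_x_sub_le_meshDist m' hi.le, m.abs_x_sub_le_meshDist m' hi]
  have hpt (t : ℝ) : |(m.pc σ - m'.pc σ) t| ≤ ∑ i ∈ Finset.range N, |σ i| * |χ i t| := by
    simp only [Pi.sub_apply, pc, ← Finset.sum_sub_distrib, ← mul_sub, ← abs_mul]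
    exact Finset.abs_sum_le_sum_abs _ _
  rw [L1_eq_integral_unitMeas]
  refine (integral_mono_of_nonneg (Filter.Eventually.of_forall fun _ => abs_nonneg _)
    (integrable_finsetSum _ fun i _ => hχint i) (Filter.Eventually.of_forall hpt)).trans ?_
  rw [integral_finsetSum _ fun i _ => hχint i, mul_comm, Finset.sum_mul]
  refine Finset.sum_le_sum fun i hi => ?_
  rw [integral_const_mul, ← L1_eq_integral_unitMeas]
  exact mul_le_mul_of_nonneg_left (hχ i (Finset.mem_range.1 hi)) (abs_nonneg _)

variable {m m'} {r κ : ℝ}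

lemma L1_pc_sub_pc_le (hr0 : 0 < r) (hr : ∀ i < N, r ≤ m.h i) {σ τ : ℕ → ℝ} {K : ℝ}
    (hK0 : 0 ≤ K) (hK : ∀ i < N, m'.h i * |σ i - τ i| ≤ K * meshDist m m' * |σ i|) :
    L1 (m.pc σ - m'.pc τ) ≤ (2 + K) * (meshDist m m' / r) * L1 (m.pc σ) := by
  set δ := meshDist m m'
  have hδ : 0 ≤ δ := m.meshDist_nonneg m'
  have hvalues : L1 (m'.pc σ - m'.pc τ) ≤ K * δ * ∑ i ∈ Finset.range N, |σ i| := by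
    rw [← pc_sub, L1_pc, Finset.mul_sum]
    exact Finset.sum_le_sum fun i hi => hK i (Finset.mem_range.1 hi)
  have hsum : r * ∑ i ∈ Finset.range N, |σ i| ≤ L1 (m.pc σ) := by
    rw [L1_pc, Finset.mul_sum]
    exact Finset.sum_le_sum fun i hi =>
      mul_le_mul_of_nonneg_right (hr i (Finset.mem_range.1 hi)) (abs_nonneg _)
  calc L1 (m.pc σ - m'.pc τ) ≤ L1 (m.pc σ - m'.pc σ) + L1 (m'.pc σ - m'.pc τ) :=
        L1_sub_le (m.integrable_pc σ) (m'.integrable_pc σ) (m'.integrable_pc τ)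
    _ ≤ 2 * δ * (∑ i ∈ Finset.range N, |σ i|) + K * δ * ∑ i ∈ Finset.range N, |σ i| :=
        add_le_add (m.L1_pc_sub_pc_self_le m' σ) hvalues
    _ = (2 + K) * (δ / r) * (r * ∑ i ∈ Finset.range N, |σ i|) := by field_simp
    _ ≤ _ := by gcongr

/-- `v` on the mesh `m` and `v'` on the mesh `m'` are the piecewise linear functions taking the same
values at nodes of the same index. Passing from one to the other transports test functions between
the two finite element spaces. -/
structure SameNodalValues (m m' : Mesh N) (v v' : H1) : Prop where
  isPL : m.IsPL v
  isPL' : m'.IsPL v'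
  val_x : ∀ i ≤ N, v.val (m.x i) = v'.val (m'.x i)

namespace SameNodalValues

variable {v v' w w' : H1}

lemma of_isPL (hv : m.IsPL v) : SameNodalValues m m' v (m'.nodal (v.val ∘ m.x)) :=
  ⟨hv, m'.isPL_nodal _, fun _ hi => (m'.nodal_val_x (v.val ∘ m.x) hi).symm⟩

lemma symm (h : SameNodalValues m m' v v') : SameNodalValues m' m v' v :=
  ⟨h.isPL', h.isPL, fun i hi => (h.val_x i hi).symm⟩

lemma val_zero (h : SameNodalValues m m' v v') : v.val 0 = v'.val 0 := by
  simpa only [x_zero] using h.val_x 0 (Nat.zero_le N)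

lemma val_one (h : SameNodalValues m m' v v') : v.val 1 = v'.val 1 := by
  simpa only [x_last] using h.val_x N le_rfl

lemma exists_slopes (h : SameNodalValues m m' v v') :
    ∃ σ σ' : ℕ → ℝ, v.dval =ᵐ[unitMeas] m.pc σ ∧ v'.dval =ᵐ[unitMeas] m'.pc σ' ∧
      ∀ i < N, m.h i * σ i = m'.h i * σ' i := by
  refine ⟨_, _, h.isPL.dval_ae_eq, h.isPL'.dval_ae_eq, fun i hi => ?_⟩
  simp only [h_mul_slope _ _ hi, Function.comp, h.val_x i hi.le, h.val_x (i + 1) hi]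

lemma L1_dval_eq (h : SameNodalValues m m' v v') : L1 v.dval = L1 v'.dval := by
  obtain ⟨σ, σ', hv, hv', hσ⟩ := h.exists_slopes
  rw [L1_congr hv, L1_congr hv', L1_pc, L1_pc]
  refine Finset.sum_congr rfl fun i hi => ?_
  have hi := Finset.mem_range.1 hi
  rw [← abs_of_pos (m.h_pos hi), ← abs_of_pos (m'.h_pos hi), ← abs_mul, ← abs_mul, hσ i hi]

lemma L2_dval_le (h : SameNodalValues m m' v v') (hκ0 : 0 ≤ κ)
    (hκ : ∀ i < N, m'.h i ≤ κ * m.h i) : L2 v.dval ≤ √κ * L2 v'.dval := by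
  obtain ⟨σ, σ', hv, hv', hσ⟩ := h.exists_slopes
  refine le_of_sq_le_sq ?_ (mul_nonneg (Real.sqrt_nonneg _) (L2_nonneg _))
  rw [mul_pow, Real.sq_sqrt hκ0, L2_congr hv, L2_congr hv', L2_sq_pc, L2_sq_pc, Finset.mul_sum]
  refine Finset.sum_le_sum fun i hi => ?_
  have hi := Finset.mem_range.1 hi
  have hh := m.h_pos hi
  have hσi : σ i = m'.h i * σ' i / m.h i := by rw [← hσ i hi, mul_div_cancel_left₀ _ hh.ne']
  calc m.h i * σ i ^ 2 = m'.h i * (m'.h i * σ' i ^ 2) / m.h i := by rw [hσi]; field_simp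
    _ ≤ κ * m.h i * (m'.h i * σ' i ^ 2) / m.h i := by
      have := m'.h_pos hi
      gcongr
      exact hκ i hi
    _ = κ * (m'.h i * σ' i ^ 2) := by field_simp

lemma L1_sub_dval_le (h : SameNodalValues m m' v v') (hr0 : 0 < r) (hr : ∀ i < N, r ≤ m.h i) :
    L1 (v - v').dval ≤ 4 * (meshDist m m' / r) * L1 v.dval := by
  obtain ⟨σ, σ', hv, hv', hσ⟩ := h.exists_slopes
  rw [H1.sub_dval, L1_congr (hv.sub hv'), L1_congr hv]
  refine (L1_pc_sub_pc_le hr0 hr zero_le_two fun i hi => ?_).trans_eq (by ring)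
  rw [← abs_of_pos (m'.h_pos hi), ← abs_mul, mul_sub, ← hσ i hi, ← sub_mul, abs_mul]
  exact mul_le_mul_of_nonneg_right (m.abs_h_sub_le m' hi) (abs_nonneg _)

lemma L1_mul_dval_sub_le (h : SameNodalValues m m' v v') (hw : SameNodalValues m m' w w')
    (hr0 : 0 < r) (hr : ∀ i < N, r ≤ m.h i) (hκ0 : 0 ≤ κ) (hκ : ∀ i < N, m.h i ≤ κ * m'.h i) :
    L1 (v.dval * w.dval - v'.dval * w'.dval)
      ≤ (4 + 2 * κ) * (meshDist m m' / r) * L1 (v.dval * w.dval) := by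
  obtain ⟨σ, σ', hv, hv', hσ⟩ := h.exists_slopes
  obtain ⟨τ, τ', hw, hw', hτ⟩ := hw.exists_slopes
  have hvw := (hv.mul hw).trans (m.pc_mul_ae σ τ)
  have hvw' := (hv'.mul hw').trans (m'.pc_mul_ae σ' τ')
  rw [L1_congr (hvw.sub hvw'), L1_congr hvw]
  refine (L1_pc_sub_pc_le hr0 hr (K := 2 * (1 + κ)) (by positivity) fun i hi => ?_).trans_eq
    (by ring)
  have hh' := m'.h_pos hi
  have hratio : m.h i / m'.h i ≤ κ := (div_le_iff₀ hh').2 (hκ i hi)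
  have hratio0 : 0 ≤ m.h i / m'.h i := div_nonneg (m.h_pos hi).le hh'.le
  have hσ' : σ' i = m.h i * σ i / m'.h i := by rw [hσ i hi, mul_div_cancel_left₀ _ hh'.ne']
  have hτ' : τ' i = m.h i * τ i / m'.h i := by rw [hτ i hi, mul_div_cancel_left₀ _ hh'.ne']
  calc m'.h i * |(σ * τ) i - (σ' * τ') i|
      = |(m'.h i - m.h i) * (1 + m.h i / m'.h i) * (σ i * τ i)| := by
        rw [← abs_of_pos hh', ← abs_mul, abs_of_pos hh', Pi.mul_apply, Pi.mul_apply, hσ', hτ']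
        congr 1
        field_simp
        ring
    _ = |m'.h i - m.h i| * (1 + m.h i / m'.h i) * |σ i * τ i| := by
        rw [abs_mul, abs_mul, abs_of_nonneg (add_nonneg zero_le_one hratio0)]
    _ ≤ 2 * meshDist m m' * (1 + κ) * |σ i * τ i| := by
        have := m.meshDist_nonneg m'
        gcongr
        exact m.abs_h_sub_le m' hi
    _ = 2 * (1 + κ) * meshDist m m' * |(σ * τ) i| := by rw [Pi.mul_apply]; ring

lemma abs_B_sub_B_le {P : Coeffs} {M : ℝ} (hM : P.BoundedBy M) (h : SameNodalValues m m' v v')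
    (hw : SameNodalValues m m' w w') (hv0 : v.val 0 = 0) (hw0 : w.val 0 = 0) (hr0 : 0 < r)
    (hr : ∀ i < N, r ≤ m.h i) (hκ0 : 0 ≤ κ) (hκ : ∀ i < N, m.h i ≤ κ * m'.h i) :
    |P.B v w - P.B v' w'|
      ≤ M * (20 + 2 * κ) * (meshDist m m' / r) * (L2 v.dval * L2 w.dval) := by
  set q := meshDist m m' / r
  have hq0 : 0 ≤ q := div_nonneg (m.meshDist_nonneg m') hr0.le
  have hM0 := hM.nonneg
  have hv1 := L1_le_L2 v.memLp_two_dval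
  have hw1 := L1_le_L2 w.memLp_two_dval
  have hv2 := L2_nonneg v.dval
  have hw2 := L1_nonneg w.dval
  have hprod : L1 (v.dval * w.dval) ≤ L2 v.dval * L2 w.dval :=
    L1_mul_le_L2_mul_L2 v.memLp_two_dval w.memLp_two_dval
  calc |P.B v w - P.B v' w'|
      ≤ M * L1 (v.dval * w.dval - v'.dval * w'.dval)
        + 2 * M * (L1 (v - v').dval * L1 w.dval + L1 v'.dval * L1 (w - w').dval) :=
        hM.abs_B_sub_B_le hv0 hw0 (h.val_zero ▸ hv0) (hw.val_zero ▸ hw0)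
    _ ≤ M * ((4 + 2 * κ) * q * L1 (v.dval * w.dval))
        + 2 * M * (4 * q * L1 v.dval * L1 w.dval + L1 v.dval * (4 * q * L1 w.dval)) := by
        rw [← h.L1_dval_eq]
        have := L1_nonneg v.dval
        gcongr
        · exact h.L1_mul_dval_sub_le hw hr0 hr hκ0 hκ
        · exact h.L1_sub_dval_le hr0 hr
        · exact hw.L1_sub_dval_le hr0 hr
    _ ≤ M * ((4 + 2 * κ) * q * (L2 v.dval * L2 w.dval))
        + 2 * M * (4 * q * L2 v.dval * L2 w.dval + L2 v.dval * (4 * q * L2 w.dval)) := by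
        gcongr
    _ = _ := by ring

lemma abs_ip_sub_ip_le {f : ℝ → ℝ} (hf : MemL2 f) (h : SameNodalValues m m' v v')
    (hv0 : v.val 0 = 0) (hr0 : 0 < r) (hr : ∀ i < N, r ≤ m.h i) :
    |ip f v - ip f v'| ≤ 4 * L2 f * (meshDist m m' / r) * L2 v.dval := by
  have hq0 : 0 ≤ meshDist m m' / r := div_nonneg (m.meshDist_nonneg m') hr0.le
  have hval : L2 (v - v').val ≤ 4 * (meshDist m m' / r) * L2 v.dval :=
    ((v - v').L2_val_le_L1_dval (by simp [hv0, ← h.val_zero])).trans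
      ((h.L1_sub_dval_le hr0 hr).trans (by gcongr; exact L1_le_L2 v.memLp_two_dval))
  rw [← ip_sub hf]
  exact (abs_ip_le hf _).trans
    ((mul_le_mul_of_nonneg_left hval (L2_nonneg f)).trans_eq (by ring))

end SameNodalValues

end Mesh

/-! ### Dependence of the finite element solution on the mesh -/

namespace Coeffs

variable {P : Coeffs} {f : ℝ → ℝ}

/-- Galerkin orthogonality on both meshes, with the test function `uh - z` transported from `m` to
`m'`, leaves only differences of the same functionals on the two meshes. -/
lemma IsFESolution.L2_sub_dval_le_of_sameNodalValues {N : ℕ} {m m' : Mesh N} {uh uh' z : H1}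
    (h : P.IsFESolution f m uh) (h' : P.IsFESolution f m' uh') (hz : m.SameNodalValues m' z uh')
    (hf : MemL2 f) {M : ℝ} (hM : P.BoundedBy M) {r κ : ℝ} (hr0 : 0 < r)
    (hr : ∀ i < N, r ≤ m.h i) (hκ0 : 0 ≤ κ) (hκ : ∀ i < N, m.h i ≤ κ * m'.h i) :
    L2 (uh - z).dval
      ≤ (4 * L2 f + M * (20 + 2 * κ) * L2 z.dval) * (meshDist m m' / r) / P.a0 := by
  have hM0 := hM.nonneg
  have hF := L2_nonneg f
  have hq : 0 ≤ meshDist m m' / r := div_nonneg (m.meshDist_nonneg m') hr0.le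
  have hz0 : z.val 0 = 0 := hz.val_zero.trans h'.1
  have hz1 : z.val 1 = 0 := hz.val_one.trans h'.2.1
  have hz2 := L2_nonneg z.dval
  set w := uh - z with hw_def
  have hw0 : w.val 0 = 0 := by simp [hw_def, h.1, hz0]
  have hw1 : w.val 1 = 0 := by simp [hw_def, h.2.1, hz1]
  set W := m'.nodal (w.val ∘ m.x)
  have hw : m.SameNodalValues m' w W := .of_isPL (h.2.2.1.sub hz.isPL)
  have hBww : P.B w w = (ip f w - ip f W) - (P.B z w - P.B uh' W) := by
    rw [hw_def, P.B_sub_left, ← hw_def, h.2.2.2 w hw0 hw1 hw.isPL,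
      h'.2.2.2 W (hw.val_zero ▸ hw0) (hw.val_one ▸ hw1) hw.isPL']
    ring
  refine P.L2_dval_le_div_a0 hw0 hw1 (by positivity) ?_
  calc P.B w w ≤ |ip f w - ip f W| + |P.B z w - P.B uh' W| :=
        hBww.trans_le ((le_abs_self _).trans (abs_sub _ _))
    _ ≤ 4 * L2 f * (meshDist m m' / r) * L2 w.dval
        + M * (20 + 2 * κ) * (meshDist m m' / r) * (L2 z.dval * L2 w.dval) :=
      add_le_add (hw.abs_ip_sub_ip_le hf hw0 hr0 hr)
        (hz.abs_B_sub_B_le hM hw hz0 hw0 hr0 hr hκ0 hκ)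
    _ = _ := by ring

lemma IsFESolution.L1_sub_dval_le {N : ℕ} {m m' : Mesh N} {uh uh' : H1}
    (h : P.IsFESolution f m uh) (h' : P.IsFESolution f m' uh') (hf : MemL2 f) {M : ℝ}
    (hM : P.BoundedBy M) {r κ : ℝ} (hr0 : 0 < r) (hr : ∀ i < N, r ≤ m.h i) (hκ0 : 0 ≤ κ)
    (hκ : ∀ i < N, m.h i ≤ κ * m'.h i) (hκ' : ∀ i < N, m'.h i ≤ κ * m.h i) :
    L1 (uh - uh').dval
      ≤ (4 * L2 f + (M * (20 + 2 * κ) + 4 * P.a0) * (√κ * (L2 f / P.a0))) / P.a0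
        * (meshDist m m' / r) := by
  have ha0 := P.a0_pos
  have hM0 := hM.nonneg
  set q := meshDist m m' / r
  have hq : 0 ≤ q := div_nonneg (m.meshDist_nonneg m') hr0.le
  set z := m.nodal (uh'.val ∘ m'.x)
  have hz : m.SameNodalValues m' z uh' := (Mesh.SameNodalValues.of_isPL h'.2.2.1).symm
  set A := √κ * (L2 f / P.a0)
  have hA : L2 z.dval ≤ A := (hz.L2_dval_le hκ0 hκ').trans
    (mul_le_mul_of_nonneg_left (h'.L2_dval_le hf) (Real.sqrt_nonneg κ))
  have hdiscrete : L2 (uh - z).dval ≤ (4 * L2 f + M * (20 + 2 * κ) * A) * q / P.a0 :=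
    (h.L2_sub_dval_le_of_sameNodalValues h' hz hf hM hr0 hr hκ0 hκ).trans (by gcongr)
  have htransport : L1 (z - uh').dval ≤ 4 * q * A :=
    (hz.L1_sub_dval_le hr0 hr).trans (by gcongr; exact (L1_le_L2 z.memLp_two_dval).trans hA)
  calc L1 (uh - uh').dval ≤ L1 (uh - z).dval + L1 (z - uh').dval := H1.L1_sub_dval_le uh z uh'
    _ ≤ (4 * L2 f + M * (20 + 2 * κ) * A) * q / P.a0 + 4 * q * A :=
      add_le_add ((L1_le_L2 (uh - z).memLp_two_dval).trans hdiscrete) htransport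
    _ = _ := by field_simp; ring

variable (P)

lemma exists_L1_sub_dval_le (hf : MemL2 f) {ρ0 : ℝ} (hρ0 : 0 < ρ0) :
    ∃ K : ℝ, 0 ≤ K ∧ ∀ (N : ℕ) (m m' : Mesh N), m.InS ρ0 → m'.InS ρ0 →
      ∀ uh uh' : H1, P.IsFESolution f m uh → P.IsFESolution f m' uh' →
        L1 (uh - uh').dval ≤ K * N * meshDist m m' := by
  obtain ⟨M, hM⟩ := P.exists_boundedBy
  have ha0 := P.a0_pos
  have hM0 := hM.nonneg
  have hF := L2_nonneg f
  set κ := 2 * ρ0 with hκ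
  set K := (4 * L2 f + (M * (20 + 2 * κ) + 4 * P.a0) * (√κ * (L2 f / P.a0))) / P.a0
  refine ⟨K * ρ0, by positivity, fun N m m' hm hm' uh uh' h h' => ?_⟩
  have hN : (0 : ℝ) < N := Nat.cast_pos.2 m.N_pos
  have hκ_le {n n' : Mesh N} (hn : n.InS ρ0) (hn' : n'.InS ρ0) :
      ∀ i < N, n.h i ≤ κ * n'.h i := fun i hi =>
    calc n.h i ≤ 2 / N := (hn i hi).2
      _ = κ * (1 / (ρ0 * N)) := by rw [hκ]; field_simp
      _ ≤ κ * n'.h i := mul_le_mul_of_nonneg_left (hn' i hi).1 (by positivity)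
  exact (h.L1_sub_dval_le h' hf hM (r := 1 / (ρ0 * N)) (by positivity) (fun i hi => (hm i hi).1)
    (by positivity) (hκ_le hm hm') (hκ_le hm' hm)).trans_eq (by
      change K * (_ / _) = _; field_simp)

variable {P}

lemma exists_L2_sub_val_le_div_sq {u : H1} (hu : P.IsWeakSolution f u) (hu2 : u.IsH2) :
    ∃ K : ℝ, ∀ (N : ℕ) (m m' : Mesh N) (ρ0 : ℝ), m.InS ρ0 → m'.InS ρ0 →
      ∀ uh uh' : H1, P.IsFESolution f m uh → P.IsFESolution f m' uh' →
        L2 (uh - uh').val ≤ K / N ^ 2 := by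
  obtain ⟨K, hK⟩ := exists_L2_sub_val_le hu hu2
  refine ⟨8 * K, fun N m m' ρ0 hm hm' uh uh' h h' => ?_⟩
  have hN : (0 : ℝ) < N := Nat.cast_pos.2 m.N_pos
  have huh := hK N m uh h (2 / N) fun i hi => (hm i hi).2
  have huh' := hK N m' uh' h' (2 / N) fun i hi => (hm' i hi).2
  calc L2 (uh - uh').val ≤ L2 (uh - u).val + L2 (u - uh').val := H1.L2_sub_val_le uh u uh'
    _ = L2 (uh - u).val + L2 (uh' - u).val := by
      rw [H1.sub_val u, L2_sub_comm, ← H1.sub_val]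
    _ ≤ K * (2 / N) ^ 2 + K * (2 / N) ^ 2 := add_le_add huh huh'
    _ = 8 * K / N ^ 2 := by field_simp; ring

end Coeffs

lemma le_sqrt_mul_of_le_div_sq_of_le_mul {C₁ C₂ n δ x : ℝ} (hn : 0 < n) (hδ : 0 ≤ δ)
    (hx : 0 ≤ x) (h₁ : x ≤ C₁ / n ^ 2) (h₂ : x ≤ C₂ * n * δ) :
    x ≤ √(C₁ * C₂) * n ^ (-(1 : ℝ)/2) * δ ^ ((1 : ℝ)/2) := by
  have hpow : n ^ (-(1 : ℝ)/2) * δ ^ ((1 : ℝ)/2) = √(δ / n) := by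
    rw [neg_div, Real.rpow_neg hn.le, ← Real.sqrt_eq_rpow, ← Real.sqrt_eq_rpow,
      Real.sqrt_div hδ, inv_mul_eq_div]
  rw [mul_assoc, hpow, ← Real.sqrt_mul' _ (div_nonneg hδ hn.le)]
  refine Real.le_sqrt_of_sq_le ?_
  calc x ^ 2 = x * x := sq x
    _ ≤ C₁ / n ^ 2 * (C₂ * n * δ) := mul_le_mul h₁ h₂ hx (hx.trans h₁)
    _ = C₁ * C₂ * (δ / n) := by field_simp

theorem statement4_general (P : Coeffs) {f : ℝ → ℝ} (hf : MemL2 f) {u : H1}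
    (hu : P.IsWeakSolution f u) (hu2 : u.IsH2) {ρ0 : ℝ} (hρ0 : 0 < ρ0) :
    ∃ C : ℝ, 0 < C ∧
      ∀ (N : ℕ) (m m' : Mesh N), m.InS ρ0 → m'.InS ρ0 →
        ∀ uh uh' : H1, P.IsFESolution f m uh → P.IsFESolution f m' uh' →
          L1 (fun t => uh.dval t - uh'.dval t) ≤ C * (N:ℝ) * meshDist m m' ∧
          L2 (fun t => uh.val t - uh'.val t)
            ≤ C * (N:ℝ) ^ (-(1:ℝ)/2) * (meshDist m m') ^ ((1:ℝ)/2) ∧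
          |P.energySq uh - P.energySq uh'|
            ≤ C * (N:ℝ) ^ (-(1:ℝ)/2) * (meshDist m m') ^ ((1:ℝ)/2) := by
  obtain ⟨K₁, hL2⟩ := Coeffs.exists_L2_sub_val_le_div_sq hu hu2
  obtain ⟨K₂, hK₂, hL1⟩ := P.exists_L1_sub_dval_le hf hρ0
  have hF := L2_nonneg f
  set S := √(K₁ * K₂)
  have hS : 0 ≤ S := Real.sqrt_nonneg _
  refine ⟨K₂ + S + L2 f * S + 1, by positivity, fun N m m' hm hm' uh uh' h h' => ?_⟩
  have hN : (0:ℝ) < N := Nat.cast_pos.2 m.N_pos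
  have hδ := m.meshDist_nonneg m'
  have hderiv := hL1 N m m' hm hm' uh uh' h h'
  have hval : L2 (uh - uh').val ≤ S * (N:ℝ) ^ (-(1:ℝ)/2) * (meshDist m m') ^ ((1:ℝ)/2) :=
    le_sqrt_mul_of_le_div_sq_of_le_mul hN hδ (L2_nonneg _) (hL2 N m m' ρ0 hm hm' uh uh' h h')
      (((uh - uh').L2_val_le_L1_dval (by simp [h.1, h'.1])).trans hderiv)
  have henergy := (h.abs_energySq_sub_le h' hf).trans (mul_le_mul_of_nonneg_left hval hF)
  rw [← mul_assoc, ← mul_assoc] at henergy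
  have hFS := mul_nonneg hF hS
  exact ⟨hderiv.trans (by gcongr; linarith), hval.trans (by gcongr; linarith),
    henergy.trans (by gcongr; linarith)⟩

/-- continuous dependence of the finite element solution on the mesh
(Theorem 2.3). -/
theorem statement4 (P : Coeffs) (f : ℝ → ℝ) (hf2 : MemL2 f) (hfinf : MemLinf f)
    (u : H1) (hu : P.IsWeakSolution f u) (hu2 : u.IsH2)
    (ρ0 : ℝ) (hρ0 : 1 ≤ ρ0) :
    ∃ C : ℝ, 0 < C ∧
      ∀ (N : ℕ) (m m' : Mesh N), m.InS ρ0 → m'.InS ρ0 →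
        meshDist m m' < 1 / (ρ0 * (N:ℝ)) →
        ∀ uh uh' : H1, P.IsFESolution f m uh → P.IsFESolution f m' uh' →
          L1 (fun t => uh.dval t - uh'.dval t) ≤ C * (N:ℝ) * meshDist m m' ∧
          L2 (fun t => uh.val t - uh'.val t)
            ≤ C * (N:ℝ) ^ (-(1:ℝ)/2) * (meshDist m m') ^ ((1:ℝ)/2) ∧
          |P.energySq uh - P.energySq uh'|
            ≤ C * (N:ℝ) ^ (-(1:ℝ)/2) * (meshDist m m') ^ ((1:ℝ)/2) := by
  obtain ⟨C, hC, h⟩ := statement4_general P hf2 hu hu2 (zero_lt_one.trans_le hρ0)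
  exact ⟨C, hC, fun N m m' hm hm' _ => h N m m' hm hm'⟩

end EquidMesh
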